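/- arXiv:1712.09451 — 2 statements merged into one kernel-verified Lean document; each statement's English description precedes it below -/
import Mathlib

section
/- Let X ⊆ ℝ² be a Borel set with Hausdorff dimension strictly greater than 1. Then for Lebesgue-almost every λ ∈ ℝ, the projection π_λ(X) has positive Lebesgue measure, where π_λ : ℝ² → ℝ is given by π_λ(x, y) = x - λy. -/
open MeasureTheory Set
open scoped ENNReal Topology

lemma mp_tube (n : ℕ → ℕ) (W : Set (ℕ → ℕ)) (hW : IsOpen W)
    (hK : {x : ℕ → ℕ | ∀ i, x i ≤ n i} ⊆ W) :
    ∃ k, {x : ℕ → ℕ | ∀ i < k, x i ≤ n i} ⊆ W := by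
  let := PiNat.metricSpaceNatNat
  have hc : IsCompact {x : ℕ → ℕ | ∀ i, x i ≤ n i} := by
    have : {x : ℕ → ℕ | ∀ i, x i ≤ n i} = Set.pi univ (fun i => Set.Iic (n i)) := by
      ext x; simp [Pi.le_def]
    rw [this]
    exact isCompact_univ_pi (fun i => (Set.finite_Iic _).isCompact)
  obtain ⟨δ, hδ, hsub⟩ := hc.exists_thickening_subset_open hW hK
  obtain ⟨N, hN⟩ := exists_pow_lt_of_lt_one hδ (by norm_num : (1/2 : ℝ) < 1)
  refine ⟨N, fun y hy => hsub ?_⟩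
  rw [Metric.mem_thickening_iff]
  refine ⟨fun i => min (y i) (n i), fun i => min_le_right _ _, lt_of_le_of_lt ?_ hN⟩
  rw [← PiNat.mem_cylinder_iff_dist_le]
  intro i hi
  simp [hy i hi]

lemma mp_inner {α : Type*} [TopologicalSpace α] [T2Space α] [MeasurableSpace α]
    [BorelSpace α] (μ : Measure α) [μ.OuterRegular] (f : (ℕ → ℕ) → α) (hf : Continuous f)
    (c : ℝ≥0∞) (hc : c < μ (range f)) : ∃ K ⊆ range f, IsCompact K ∧ c ≤ μ K := by
  have step : ∀ B : Set (ℕ → ℕ), ∀ k, c < μ (f '' B) →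
      ∃ m, c < μ (f '' (B ∩ {x | x k ≤ m})) := by
    intro B k h
    have hmono : Monotone (fun m : ℕ => f '' (B ∩ {x | x k ≤ m})) := by
      intro a b hab
      apply image_mono
      apply inter_subset_inter_right
      intro x hx
      exact le_trans hx hab
    have : f '' B = ⋃ m : ℕ, f '' (B ∩ {x | x k ≤ m}) := by
      rw [← image_iUnion, ← inter_iUnion]
      congr 1
      ext x
      simp only [mem_inter_iff, mem_iUnion, mem_ofPred_eq]
      exact ⟨fun h => ⟨h, x k, le_rfl⟩, fun h => h.1⟩
    rw [this, hmono.measure_iUnion] at h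
    exact lt_iSup_iff.1 h
  let S : ℕ → {B : Set (ℕ → ℕ) // c < μ (f '' B)} := fun k =>
    Nat.rec ⟨univ, by simpa using hc⟩
      (fun k B => ⟨B.1 ∩ {x | x k ≤ (step B.1 k B.2).choose}, (step B.1 k B.2).choose_spec⟩) k
  let n : ℕ → ℕ := fun k => (step (S k).1 k (S k).2).choose
  have hS : ∀ k, (S k).1 = {x : ℕ → ℕ | ∀ i < k, x i ≤ n i} := by
    intro k
    induction k with
    | zero => ext x; simp [S]
    | succ k ih =>
      have : (S (k+1)).1 = (S k).1 ∩ {x | x k ≤ n k} := rfl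
      rw [this, ih]
      ext x
      simp only [mem_inter_iff, mem_ofPred_eq, Nat.lt_succ_iff_lt_or_eq]
      constructor
      · rintro ⟨h1, h2⟩ i (hi | rfl)
        · exact h1 i hi
        · exact h2
      · intro h
        exact ⟨fun i hi => h i (Or.inl hi), h k (Or.inr rfl)⟩
  have hcK : IsCompact {x : ℕ → ℕ | ∀ i, x i ≤ n i} := by
    have : {x : ℕ → ℕ | ∀ i, x i ≤ n i} = Set.pi univ (fun i => Set.Iic (n i)) := by
      ext x; simp [Pi.le_def]
    rw [this]
    exact isCompact_univ_pi (fun i => (Set.finite_Iic _).isCompact)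
  refine ⟨f '' {x | ∀ i, x i ≤ n i}, image_subset_range _ _, hcK.image hf, ?_⟩
  rw [Set.measure_eq_iInf_isOpen]
  refine le_iInf₂ fun V hV => le_iInf fun hVo => ?_
  obtain ⟨k, hk⟩ := mp_tube n (f ⁻¹' V) (hVo.preimage hf) (image_subset_iff.1 hV)
  rw [← hS] at hk
  exact (S k).2.le.trans (measure_mono (image_subset_iff.2 hk))

lemma mp_null {α : Type*} [TopologicalSpace α] [T2Space α] [MeasurableSpace α]
    [BorelSpace α] (μ : Measure α) [μ.OuterRegular] [IsFiniteMeasure μ] (A : Set α)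
    (hA : AnalyticSet A) : NullMeasurableSet A μ := by
  rw [AnalyticSet] at hA
  rcases hA with rfl | ⟨f, hf, rfl⟩
  · exact MeasurableSet.empty.nullMeasurableSet
  by_cases h0 : μ (range f) = 0
  · exact NullMeasurableSet.of_null h0
  obtain ⟨u, -, hu, hlim⟩ := exists_seq_strictMono_tendsto' (pos_iff_ne_zero.2 h0)
  choose K hKs hKc hK using fun n => mp_inner μ f hf (u n) (hu n).2
  have hm : MeasurableSet (⋃ n, K n) := MeasurableSet.iUnion fun n => (hKc n).measurableSet
  have : (⋃ n, K n : Set α) =ᵐ[μ] range f := by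
    refine ae_eq_of_subset_of_measure_ge (iUnion_subset hKs) ?_ hm.nullMeasurableSet
      (measure_ne_top _ _)
    refine le_of_tendsto' hlim fun n => (hK n).trans (measure_mono (subset_iUnion K n))
  exact hm.nullMeasurableSet.congr this

lemma mp_null_vol (A : Set (ℝ × ℝ)) (hA : AnalyticSet A) : NullMeasurableSet A volume := by
  have := mp_null (Measure.toFinite (volume : Measure (ℝ × ℝ))) A hA
  exact this.mono_ac (absolutelyContinuous_toFinite _)

lemma mp_main_red (X : Set (ℝ × ℝ)) (hX : MeasurableSet X)
    (H : ∀ E : Set ℝ, ∀ M : ℕ, MeasurableSet E → (∀ l ∈ E, |l| ≤ M) → volume E ≠ 0 →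
      volume {z : ℝ × ℝ | z.1 ∈ E ∧ ∃ p ∈ X, z.2 = p.1 - z.1 * p.2} = 0 → False) :
    ∀ᵐ l : ℝ, 0 < volume ((fun p : ℝ × ℝ => p.1 - l * p.2) '' X) := by
  set Z : Set (ℝ × ℝ) := {z : ℝ × ℝ | ∃ p ∈ X, z.2 = p.1 - z.1 * p.2} with hZ
  have hZa : AnalyticSet Z := by
    have h1 : AnalyticSet ((univ : Set ℝ) ×ˢ X) := (MeasurableSet.univ.prod hX).analyticSet
    have h2 := h1.image_of_continuous (f := fun q : ℝ × (ℝ × ℝ) => (q.1, q.2.1 - q.1 * q.2.2))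
      (by fun_prop)
    convert h2 using 1
    ext ⟨l, t⟩
    simp only [hZ, mem_ofPred_eq, mem_image, mem_prod, mem_univ, true_and, Prod.exists,
      Prod.mk.injEq]
    constructor
    · rintro ⟨x, y, h, h'⟩; exact ⟨l, x, y, h, rfl, h'.symm⟩
    · rintro ⟨l', x, y, h, rfl, h'⟩; exact ⟨x, y, h, h'.symm⟩
  have hZn := mp_null_vol Z hZa
  obtain ⟨Z', hZs, hZm, hZe⟩ := hZn.exists_measurable_superset_ae_eq
  have hsec : ∀ᵐ l : ℝ, ∀ᵐ t : ℝ, ((l, t) ∈ Z' ↔ (l, t) ∈ Z) := by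
    have : ∀ᵐ z : ℝ × ℝ, (z ∈ Z' ↔ z ∈ Z) := by
      filter_upwards [hZe] with z hz
      exact iff_of_eq hz
    rw [Measure.volume_eq_prod] at this
    exact Measure.ae_ae_of_ae_prod this
  let D : Set ℝ := {l | volume (Prod.mk l ⁻¹' Z') = 0}
  have hD : MeasurableSet D := (measurable_measure_prodMk_left hZm) (measurableSet_singleton 0)
  have hD0 : volume D = 0 := by
    by_contra hne
    have : ∃ M : ℕ, volume (D ∩ {l | |l| ≤ M}) ≠ 0 := by
      by_contra! hall
      apply hne
      have hsub : D ⊆ ⋃ M : ℕ, D ∩ {l | |l| ≤ M} := by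
        intro l hl
        obtain ⟨M, hM⟩ := exists_nat_ge |l|
        exact mem_iUnion.2 ⟨M, hl, hM⟩
      exact measure_mono_null hsub (measure_iUnion_null hall)
    obtain ⟨M, hM⟩ := this
    have hEm : MeasurableSet (D ∩ {l : ℝ | |l| ≤ M}) :=
      hD.inter (measurableSet_le (by fun_prop) (by fun_prop))
    refine H (D ∩ {l | |l| ≤ M}) M hEm (fun l hl => hl.2) hM ?_
    refine measure_mono_null (t := Z' ∩ (D ∩ {l : ℝ | |l| ≤ M}) ×ˢ univ) ?_ ?_
    · rintro z ⟨h1, h2⟩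
      exact ⟨hZs h2, h1, mem_univ _⟩
    · rw [Measure.volume_eq_prod, Measure.measure_prod_null (hZm.inter (hEm.prod .univ))]
      refine Filter.Eventually.of_forall fun l => ?_
      by_cases hl : l ∈ D
      · exact measure_mono_null (fun t ht => ht.1) hl
      · refine measure_mono_null (t := ∅) (fun t ht => hl ht.2.1.1) (by simp)
  have hD' : ∀ᵐ l : ℝ, l ∉ D := measure_eq_zero_iff_ae_notMem.1 hD0
  filter_upwards [hD', hsec] with l h1 h2
  rw [pos_iff_ne_zero]
  intro h3
  apply h1
  have : (Prod.mk l ⁻¹' Z' : Set ℝ) =ᵐ[volume] ((fun p : ℝ × ℝ => p.1 - l * p.2) '' X : Set ℝ) := by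
    filter_upwards [h2] with t ht
    apply propext
    refine Iff.trans ht ?_
    simp only [hZ, mem_ofPred_eq]
    exact ⟨fun ⟨p, hp, h⟩ => ⟨p, hp, h.symm⟩, fun ⟨p, hp, h⟩ => ⟨p, hp, h.symm⟩⟩
  change volume _ = 0
  rw [measure_congr this, h3]

noncomputable def mpSeq (Φ : ℕ → (ℕ → ℝ) → ℝ) : ℕ → ℝ
  | i => Φ i (fun j => if _h : j < i then mpSeq Φ j else 0)
decreasing_by assumption

lemma mp_greedy {κ : Type*} [DecidableEq κ] (A : ℕ → Finset κ) (hA : ∀ i, (A i).Nonempty)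
    (cap : κ → ℝ) (hcap : ∀ q, 0 ≤ cap q) :
    ∃ a : ℕ → ℝ, (∀ i, 0 ≤ a i) ∧
      (∀ q n, ∑ i ∈ Finset.range n, (if q ∈ A i then a i else 0) ≤ cap q) ∧
      ∀ i, ∃ q ∈ A i, ∑ j ∈ Finset.range (i+1), (if q ∈ A j then a j else 0) = cap q := by
  let Φ : ℕ → (ℕ → ℝ) → ℝ := fun i a => (A i).inf' (hA i)
    (fun q => cap q - ∑ j ∈ Finset.range i, (if q ∈ A j then a j else 0))
  let a := mpSeq Φ
  have ha : ∀ i, a i = (A i).inf' (hA i)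
    (fun q => cap q - ∑ j ∈ Finset.range i, (if q ∈ A j then a j else 0)) := by
    intro i
    have : a i = Φ i (fun j => if _h : j < i then a j else 0) := by
      change mpSeq Φ i = _
      rw [mpSeq]
    rw [this]
    apply Finset.inf'_congr _ rfl
    intro q hq
    congr 1
    apply Finset.sum_congr rfl
    intro j hj
    simp [Finset.mem_range.1 hj]
  have hle : ∀ n q, ∑ i ∈ Finset.range n, (if q ∈ A i then a i else 0) ≤ cap q := by
    intro n
    induction n with
    | zero => intro q; simpa using hcap q
    | succ n ih =>
      intro q
      rw [Finset.sum_range_succ]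
      by_cases hq : q ∈ A n
      · rw [if_pos hq]
        have : a n ≤ cap q - ∑ j ∈ Finset.range n, (if q ∈ A j then a j else 0) := by
          rw [ha n]
          exact Finset.inf'_le (fun q => cap q - ∑ j ∈ Finset.range n, (if q ∈ A j then a j else 0)) hq
        linarith
      · simpa [hq] using ih q
  refine ⟨a, ?_, fun q n => hle n q, ?_⟩
  · intro i
    rw [ha i]
    apply Finset.le_inf'
    intro q _
    linarith [hle i q]
  · intro i
    obtain ⟨q, hq, h⟩ := Finset.exists_mem_eq_inf' (hA i)
      (fun q => cap q - ∑ j ∈ Finset.range i, (if q ∈ A j then a j else 0))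
    refine ⟨q, hq, ?_⟩
    rw [Finset.sum_range_succ, if_pos hq, ha i, h]
    ring

noncomputable def mpCell (k : ℕ) (p : ℝ × ℝ) : ℤ × ℤ := (⌊2^k * p.1⌋, ⌊2^k * p.2⌋)

lemma mp_floor_nest (k : ℕ) (x : ℝ) : ⌊2^k * x⌋ = ⌊2^(k+1) * x⌋ / 2 := by
  have := Int.floor_div_natCast (2^(k+1) * x) 2
  rw [Nat.cast_ofNat, Nat.cast_ofNat] at this
  rw [← this]
  congr 1
  ring

lemma mpCell_nest {j k : ℕ} (hjk : j ≤ k) {p q : ℝ × ℝ} (h : mpCell k p = mpCell k q) :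
    mpCell j p = mpCell j q := by
  induction k, hjk using Nat.le_induction with
  | base => exact h
  | succ k _ ih =>
    apply ih
    simp only [mpCell, Prod.mk.injEq] at h ⊢
    rw [mp_floor_nest k p.1, mp_floor_nest k p.2, mp_floor_nest k q.1, mp_floor_nest k q.2, h.1, h.2]
    exact ⟨rfl, rfl⟩

lemma mp_floor_dist {k : ℕ} {x y : ℝ} (h : ⌊2^k * x⌋ = ⌊2^k * y⌋) : |x - y| < (1/2)^k := by
  have := Int.abs_sub_lt_one_of_floor_eq_floor h
  rw [← mul_sub, abs_mul, abs_of_pos (by positivity : (0:ℝ) < 2^k)] at this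
  rw [one_div, inv_pow, ← one_div, lt_div_iff₀ (by positivity)]
  linarith

lemma mpCell_dist {k : ℕ} {p q : ℝ × ℝ} (h : mpCell k p = mpCell k q) : dist p q < (1/2)^k := by
  simp only [mpCell, Prod.mk.injEq] at h
  rw [Prod.dist_eq, max_lt_iff, Real.dist_eq, Real.dist_eq]
  exact ⟨mp_floor_dist h.1, mp_floor_dist h.2⟩

lemma mpCell_meas (k : ℕ) : Measurable (mpCell k) := by
  unfold mpCell
  fun_prop

lemma mp_floor_vol (k : ℕ) (m : ℤ) : volume {x : ℝ | ⌊2^k * x⌋ = m} = ENNReal.ofReal ((1/2)^k) := by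
  have : {x : ℝ | ⌊2^k * x⌋ = m} = Ico ((m:ℝ) / 2^k) ((m+1) / 2^k) := by
    ext x
    rw [mem_ofPred_eq, Int.floor_eq_iff, mem_Ico, div_le_iff₀ (by positivity), lt_div_iff₀ (by positivity),
      mul_comm]
  rw [this, Real.volume_Ico]
  congr 1
  rw [one_div, inv_pow]
  field_simp
  ring

lemma mpCell_vol (k : ℕ) (q : ℤ × ℤ) : volume {p | mpCell k p = q} = ENNReal.ofReal ((1/4)^k) := by
  have : {p | mpCell k p = q} = {x : ℝ | ⌊2^k * x⌋ = q.1} ×ˢ {x : ℝ | ⌊2^k * x⌋ = q.2} := by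
    ext p
    simp [mpCell, Prod.ext_iff]
  rw [this, Measure.volume_eq_prod, Measure.prod_prod, mp_floor_vol, mp_floor_vol,
    ← ENNReal.ofReal_mul (by positivity), ← mul_pow]
  norm_num

lemma mp_ball_cover (k : ℕ) (p q : ℝ × ℝ) (h : dist p q ≤ (1/2)^k) :
    ∃ e ∈ (Finset.Icc (-1:ℤ) 1 ×ˢ Finset.Icc (-1:ℤ) 1), mpCell k q = mpCell k p + e := by
  have key : ∀ x y : ℝ, dist x y ≤ (1/2)^k → ⌊2^k * y⌋ - ⌊2^k * x⌋ ∈ Finset.Icc (-1:ℤ) 1 := by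
    intro x y hxy
    rw [Real.dist_eq, one_div, inv_pow, ← one_div, le_div_iff₀ (by positivity)] at hxy
    have h2 : |2^k * x - 2^k * y| ≤ 1 := by
      rw [← mul_sub, abs_mul, abs_of_pos (by positivity : (0:ℝ) < 2^k)]; linarith
    rw [abs_le] at h2
    have a1 := Int.floor_le (2^k * x)
    have a2 := Int.lt_floor_add_one (2^k * x)
    have b1 := Int.floor_le (2^k * y)
    have b2 := Int.lt_floor_add_one (2^k * y)
    rw [Finset.mem_Icc]
    have c1 : ((⌊2^k * y⌋ : ℤ) : ℝ) < ((⌊2^k * x⌋ + 2 : ℤ) : ℝ) := by push_cast; linarith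
    have c2 : ((⌊2^k * x⌋ : ℤ) : ℝ) < ((⌊2^k * y⌋ + 2 : ℤ) : ℝ) := by push_cast; linarith
    rw [Int.cast_lt] at c1 c2
    omega
  rw [Prod.dist_eq, max_le_iff] at h
  refine ⟨mpCell k q - mpCell k p, ?_, by abel⟩
  rw [Finset.mem_product]
  exact ⟨key _ _ h.1, key _ _ h.2⟩

lemma mp_adjoint (ν : Measure ℝ) [SFinite ν] (φ g : ℝ × ℝ → ℝ≥0∞) (hφ : Measurable φ)
    (hg : Measurable g) :
    ∫⁻ l, (∫⁻ t, φ (l, t) * (∫⁻ y, g (t + l * y, y))) ∂ν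
      = ∫⁻ p, g p * ∫⁻ l, φ (l, p.1 - l * p.2) ∂ν := by
  have h1 : ∀ l, ∫⁻ t, φ (l, t) * (∫⁻ y, g (t + l * y, y))
      = ∫⁻ y, ∫⁻ x, φ (l, x - l * y) * g (x, y) := by
    intro l
    have : ∀ t, φ (l, t) * (∫⁻ y, g (t + l * y, y)) = ∫⁻ y, φ (l, t) * g (t + l * y, y) := by
      intro t
      rw [lintegral_const_mul _ (by fun_prop)]
    simp_rw [this]
    rw [lintegral_lintegral_swap (by fun_prop)]
    apply lintegral_congr
    intro y
    rw [← lintegral_sub_right_eq_self (fun t => φ (l, t) * g (t + l * y, y)) (l * y)]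
    simp
  simp_rw [h1]
  have h2 : ∫⁻ p, g p * ∫⁻ l, φ (l, p.1 - l * p.2) ∂ν
      = ∫⁻ p, ∫⁻ l, φ (l, p.1 - l * p.2) * g p ∂ν := by
    apply lintegral_congr
    intro p
    rw [lintegral_mul_const _ (by fun_prop), mul_comm]
  symm
  rw [h2, lintegral_lintegral_swap (by fun_prop)]
  apply lintegral_congr
  intro l
  rw [Measure.volume_eq_prod, lintegral_prod_symm _ (by fun_prop)]

lemma mp_scale (f : ℝ → ℝ≥0∞) (hf : Measurable f) (x d : ℝ) (hd : d ≠ 0) :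
    ∫⁻ l, f (x + l * d) = ENNReal.ofReal |d⁻¹| * ∫⁻ z, f z := by
  have h := Real.map_volume_mul_right hd
  have h1 : ∫⁻ l, f (x + l * d) = ∫⁻ z, f (x + z) ∂(Measure.map (fun l => l * d) volume) := by
    rw [lintegral_map (by fun_prop) (by fun_prop)]
  rw [h1, h, lintegral_smul_measure, lintegral_add_left_eq_self f x, smul_eq_mul]

noncomputable def mpKer (p q : ℝ × ℝ) : ℝ≥0∞ :=
  ∑' k : ℕ, ENNReal.ofReal (2^(k+1)) * indicator {q | dist p q ≤ (1/2)^k} 1 q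

lemma mpKer_meas (p : ℝ × ℝ) : Measurable (mpKer p) := by
  unfold mpKer
  refine Measurable.tsum fun k => ?_
  refine Measurable.const_mul (measurable_one.indicator ?_) _
  exact measurableSet_le (by fun_prop) (by fun_prop)

lemma mpKer_ge (p q : ℝ × ℝ) (h0 : 0 < dist p q) (h1 : dist p q < 1) :
    ENNReal.ofReal (1 / dist p q) ≤ mpKer p q := by
  obtain ⟨k, hk1, hk2⟩ := exists_nat_pow_near_of_lt_one h0 h1.le (by norm_num : (0:ℝ) < 1/2)
    (by norm_num)
  rw [mpKer]
  refine le_trans ?_ (ENNReal.le_tsum k)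
  have hq : q ∈ {q | dist p q ≤ (1/2)^k} := hk2
  rw [indicator_of_mem hq, Pi.one_apply, mul_one]
  apply ENNReal.ofReal_le_ofReal
  rw [one_div, inv_pow, ← one_div, div_lt_iff₀ (by positivity)] at hk1
  rw [div_le_iff₀ h0]
  linarith

lemma mp_potential (g : ℝ × ℝ → ℝ≥0∞) (hg : Measurable g) (θ : ℝ)
    (hcell : ∀ k q, ∫⁻ p in {p | mpCell k p = q}, g p ≤ ENNReal.ofReal (θ ^ k)) (p : ℝ × ℝ) :
    ∫⁻ q, g q * mpKer p q ≤ 18 * ∑' k : ℕ, ENNReal.ofReal ((2 * θ) ^ k) := by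
  have hball : ∀ k : ℕ, MeasurableSet {q : ℝ × ℝ | dist p q ≤ (1/2)^k} := fun k =>
    measurableSet_le (by fun_prop) (by fun_prop)
  have h1 : ∀ q, g q * mpKer p q = ∑' k : ℕ, ENNReal.ofReal (2^(k+1)) *
      indicator {q | dist p q ≤ (1/2)^k} g q := by
    intro q
    rw [mpKer, ← ENNReal.tsum_mul_left]
    congr 1
    ext k
    by_cases hq : q ∈ {q | dist p q ≤ (1/2)^k}
    · simp only [indicator_of_mem hq, Pi.one_apply]; ring
    · simp only [indicator_of_notMem hq]; ring
  simp_rw [h1]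
  rw [lintegral_tsum (fun k => ((hg.indicator (hball k)).const_mul _).aemeasurable),
    ← ENNReal.tsum_mul_left]
  apply ENNReal.tsum_le_tsum
  intro k
  rw [lintegral_const_mul _ (hg.indicator (hball k)), lintegral_indicator (hball k)]
  have h2 : ∫⁻ q in {q | dist p q ≤ (1/2)^k}, g q ≤ 9 * ENNReal.ofReal (θ ^ k) := by
    calc ∫⁻ q in {q | dist p q ≤ (1/2)^k}, g q
        ≤ ∫⁻ q in ⋃ e ∈ (Finset.Icc (-1:ℤ) 1 ×ˢ Finset.Icc (-1:ℤ) 1),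
            {q | mpCell k q = mpCell k p + e}, g q := by
          apply lintegral_mono_set
          intro q hq
          obtain ⟨e, he, h⟩ := mp_ball_cover k p q hq
          exact mem_biUnion he h
      _ ≤ ∑ e ∈ (Finset.Icc (-1:ℤ) 1 ×ˢ Finset.Icc (-1:ℤ) 1),
            ∫⁻ q in {q | mpCell k q = mpCell k p + e}, g q := by
          simp_rw [← withDensity_apply' g]
          exact measure_biUnion_finset_le _ _
      _ ≤ ∑ e ∈ (Finset.Icc (-1:ℤ) 1 ×ˢ Finset.Icc (-1:ℤ) 1), ENNReal.ofReal (θ ^ k) :=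
          Finset.sum_le_sum fun e _ => hcell _ _
      _ = 9 * ENNReal.ofReal (θ ^ k) := by
          rw [Finset.sum_const]; simp
  calc _ ≤ ENNReal.ofReal (2^(k+1)) * (9 * ENNReal.ofReal (θ ^ k)) := by gcongr
    _ = 18 * ENNReal.ofReal ((2 * θ) ^ k) := by
      rw [mul_pow, ENNReal.ofReal_mul (by positivity), pow_succ, ENNReal.ofReal_mul (by positivity)]
      simp only [ENNReal.ofReal_ofNat]
      ring

lemma mp_inner_pot (g : ℝ × ℝ → ℝ≥0∞) (hg : Measurable g) (r : ℤ × ℤ)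
    (hsupp : ∀ p, g p ≠ 0 → mpCell 0 p = r) (M : ℕ) (hM : 1 ≤ M) (p : ℝ × ℝ) (hp : g p ≠ 0)
    (E : Set ℝ) (hE : MeasurableSet E) (hEM : ∀ l ∈ E, |l| ≤ M) :
    ∫⁻ l in E, ∫⁻ y, g ((p.1 - l * p.2) + l * y, y) ≤ M * ∫⁻ q, g q * mpKer p q := by
  rw [lintegral_lintegral_swap (by fun_prop), ← lintegral_const_mul (M : ℝ≥0∞) (f := fun q => g q * mpKer p q) (hg.mul (mpKer_meas p)),
    Measure.volume_eq_prod,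
    lintegral_prod_symm (fun q => (M : ℝ≥0∞) * (g q * mpKer p q))
      (((hg.mul (mpKer_meas p)).const_mul _).aemeasurable)]
  apply lintegral_mono_ae
  have hne : ∀ᵐ y : ℝ, y ≠ p.2 := by
    simp [ae_iff, measure_singleton]
  filter_upwards [hne] with y hy
  have hd : y - p.2 ≠ 0 := sub_ne_zero.2 hy
  have hd' : 0 < |y - p.2| := abs_pos.2 hd
  let S : Set ℝ := {x | |x - p.1| ≤ M * |y - p.2|}
  have hS : MeasurableSet S := measurableSet_le (by fun_prop) (by fun_prop)
  have hgy : Measurable (fun x => g (x, y)) := by fun_prop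
  calc ∫⁻ l in E, g ((p.1 - l * p.2) + l * y, y)
      = ∫⁻ l, indicator E (fun l => g ((p.1 - l * p.2) + l * y, y)) l := by
        rw [lintegral_indicator hE]
    _ ≤ ∫⁻ l, (indicator S (fun x => g (x, y))) (p.1 + l * (y - p.2)) := by
        apply lintegral_mono
        intro l
        by_cases hl : l ∈ E
        · have : p.1 + l * (y - p.2) ∈ S := by
            simp only [S, mem_ofPred_eq, add_sub_cancel_left, abs_mul]
            exact mul_le_mul_of_nonneg_right (hEM l hl) (abs_nonneg _)
          simp only [indicator_of_mem hl, indicator_of_mem this]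
          apply le_of_eq
          congr 2
          ring
        · simp [indicator_of_notMem hl]
    _ = ENNReal.ofReal |(y - p.2)⁻¹| * ∫⁻ x, indicator S (fun x => g (x, y)) x :=
        mp_scale _ (hgy.indicator hS) _ _ hd
    _ = ∫⁻ x, ENNReal.ofReal |(y - p.2)⁻¹| * indicator S (fun x => g (x, y)) x := by
        rw [lintegral_const_mul _ (hgy.indicator hS)]
    _ ≤ ∫⁻ x, M * (g (x, y) * mpKer p (x, y)) := by
        apply lintegral_mono
        intro x
        change ENNReal.ofReal |(y - p.2)⁻¹| * indicator S (fun x => g (x, y)) x ≤ M * (g (x, y) * mpKer p (x, y))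
        by_cases hx : x ∈ S
        swap
        · simp [indicator_of_notMem hx]
        rw [indicator_of_mem hx]
        by_cases hq : g (x, y) = 0
        · simp [hq]
        have hcell : mpCell 0 p = mpCell 0 (x, y) := by rw [hsupp _ hp, hsupp _ hq]
        have hlt := mpCell_dist hcell
        rw [pow_zero] at hlt
        have hle : dist p (x, y) ≤ M * |y - p.2| := by
          rw [Prod.dist_eq, max_le_iff, Real.dist_eq, Real.dist_eq, abs_sub_comm, abs_sub_comm p.2]
          refine ⟨hx, ?_⟩
          have : (1:ℝ) ≤ M := by exact_mod_cast hM
          nlinarith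
        have hpos : 0 < dist p (x, y) := by
          rw [dist_pos]
          rintro rfl
          exact hy rfl
        have hk := mpKer_ge p (x, y) hpos hlt
        have : ENNReal.ofReal |(y - p.2)⁻¹| ≤ M * mpKer p (x, y) := by
          calc ENNReal.ofReal |(y - p.2)⁻¹| ≤ ENNReal.ofReal (M * (1 / dist p (x, y))) := by
                apply ENNReal.ofReal_le_ofReal
                rw [abs_inv, mul_one_div, le_div_iff₀ hpos, inv_mul_le_iff₀ hd']
                linarith
            _ = M * ENNReal.ofReal (1 / dist p (x, y)) := by
                rw [ENNReal.ofReal_mul (by positivity), ENNReal.ofReal_natCast]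
            _ ≤ _ := by gcongr
        calc _ ≤ M * mpKer p (x, y) * g (x, y) := by gcongr
          _ = _ := by ring

lemma mp_energy (g : ℝ × ℝ → ℝ≥0∞) (hg : Measurable g) (r : ℤ × ℤ)
    (hsupp : ∀ p, g p ≠ 0 → mpCell 0 p = r) (M : ℕ) (hM : 1 ≤ M) (θ : ℝ)
    (hcell : ∀ k q, ∫⁻ p in {p | mpCell k p = q}, g p ≤ ENNReal.ofReal (θ ^ k))
    (E : Set ℝ) (hE : MeasurableSet E) (hEM : ∀ l ∈ E, |l| ≤ M) :
    ∫⁻ l in E, ∫⁻ t, (∫⁻ y, g (t + l * y, y)) ^ 2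
      ≤ M * (18 * ∑' k : ℕ, ENNReal.ofReal ((2 * θ) ^ k)) * ∫⁻ p, g p := by
  have hG : Measurable (fun z : ℝ × ℝ => ∫⁻ y, g (z.2 + z.1 * y, y)) := by fun_prop
  have := mp_adjoint (volume.restrict E) (fun z => ∫⁻ y, g (z.2 + z.1 * y, y)) g hG hg
  simp_rw [sq]
  rw [this, ← lintegral_const_mul _ hg]
  apply lintegral_mono
  intro p
  by_cases hp : g p = 0
  · simp [hp]
  change g p * _ ≤ _ * g p
  rw [mul_comm]
  gcongr
  refine (mp_inner_pot g hg r hsupp M hM p hp E hE hEM).trans ?_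
  gcongr
  exact mp_potential g hg θ hcell p

lemma mp_mass (g : ℝ × ℝ → ℝ≥0∞) (hg : Measurable g) (r : ℤ × ℤ)
    (hsupp : ∀ p, g p ≠ 0 → mpCell 0 p = r) (M : ℕ) (hM : 1 ≤ M) (θ : ℝ)
    (hcell : ∀ k q, ∫⁻ p in {p | mpCell k p = q}, g p ≤ ENNReal.ofReal (θ ^ k))
    (E : Set ℝ) (hE : MeasurableSet E) (hEM : ∀ l ∈ E, |l| ≤ M) (O : Set (ℝ × ℝ))
    (hO : MeasurableSet O) (c : ℝ≥0∞)
    (hc : ∀ p, g p ≠ 0 → c ≤ volume (E ∩ {l | (l, p.1 - l * p.2) ∈ O})) (hfin : ∫⁻ p, g p ≠ ∞) :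
    c ^ 2 * ∫⁻ p, g p ≤ volume O * (M * (18 * ∑' k : ℕ, ENNReal.ofReal ((2 * θ) ^ k))) := by
  set m := ∫⁻ p, g p with hm
  set C := (M * (18 * ∑' k : ℕ, ENNReal.ofReal ((2 * θ) ^ k)) : ℝ≥0∞) with hC
  by_cases hm0 : m = 0
  · simp [hm0]
  have h1 : c * m ≤ ∫⁻ p, g p * ∫⁻ l in E, indicator O 1 (l, p.1 - l * p.2) := by
    rw [hm, ← lintegral_const_mul _ hg]
    apply lintegral_mono
    intro p
    by_cases hp : g p = 0
    · simp [hp]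
    change c * g p ≤ g p * _
    rw [mul_comm]
    gcongr
    refine (hc p hp).trans (le_of_eq ?_)
    have hms : MeasurableSet {l : ℝ | (l, p.1 - l * p.2) ∈ O} :=
      hO.preimage (by fun_prop : Measurable fun l : ℝ => (l, p.1 - l * p.2))
    have : ∀ l : ℝ, (indicator O 1 (l, p.1 - l * p.2) : ℝ≥0∞)
        = indicator {l : ℝ | (l, p.1 - l * p.2) ∈ O} 1 l := fun l => rfl
    simp_rw [this]
    rw [lintegral_indicator_one hms, Measure.restrict_apply hms, inter_comm]
  have hG : Measurable (fun z : ℝ × ℝ => ∫⁻ y, g (z.2 + z.1 * y, y)) := by fun_prop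
  have hI : Measurable (indicator O (1 : ℝ × ℝ → ℝ≥0∞)) := measurable_one.indicator hO
  rw [← mp_adjoint (volume.restrict E) (indicator O 1) g hI hg] at h1
  rw [← lintegral_prod (fun z : ℝ × ℝ => indicator O 1 z * ∫⁻ y, g (z.2 + z.1 * y, y))
    (hI.mul hG).aemeasurable] at h1
  have h2 := ENNReal.lintegral_mul_le_Lp_mul_Lq ((volume.restrict E).prod volume)
    (Real.HolderConjugate.two_two) hI.aemeasurable hG.aemeasurable
  have h3 : ∫⁻ z, indicator O (1 : ℝ × ℝ → ℝ≥0∞) z ^ (2:ℝ) ∂((volume.restrict E).prod volume)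
      ≤ volume O := by
    have : ∀ z, indicator O (1 : ℝ × ℝ → ℝ≥0∞) z ^ (2:ℝ) = indicator O 1 z := by
      intro z
      by_cases hz : z ∈ O <;> simp [hz]
    simp_rw [this]
    rw [lintegral_indicator_one hO, Measure.volume_eq_prod]
    have hle : (volume.restrict E).prod (volume : Measure ℝ) ≤ volume.prod volume := by
      apply Measure.prod_mono Measure.restrict_le_self le_rfl
    exact hle O
  have h4 : ∫⁻ z, (∫⁻ y, g (z.2 + z.1 * y, y)) ^ (2:ℝ) ∂((volume.restrict E).prod volume)
      ≤ C * m := by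
    rw [lintegral_prod _ (by fun_prop)]
    simp_rw [ENNReal.rpow_two]
    exact mp_energy g hg r hsupp M hM θ hcell E hE hEM
  have h5 : c * m ≤ (volume O) ^ (1/2 : ℝ) * (C * m) ^ (1/2 : ℝ) := by
    refine h1.trans (h2.trans ?_)
    gcongr
  have h6 : (c * m) ^ 2 ≤ volume O * (C * m) := by
    calc (c * m) ^ 2 ≤ ((volume O) ^ (1/2 : ℝ) * (C * m) ^ (1/2 : ℝ)) ^ 2 := by gcongr
      _ = _ := by
        rw [mul_pow, ← ENNReal.rpow_mul_natCast, ← ENNReal.rpow_mul_natCast]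
        norm_num
  have h7 : (c ^ 2 * m) * m ≤ (volume O * C) * m := by
    calc _ = (c * m) ^ 2 := by ring
      _ ≤ _ := h6
      _ = _ := by ring
  exact (ENNReal.mul_le_mul_iff_left hm0 hfin).1 h7

lemma mp_local (x : ℝ × ℝ) (E : Set ℝ) (O : Set (ℝ × ℝ)) (hO : IsOpen O)
    (hx : ∀ l ∈ E, (l, x.1 - l * x.2) ∈ O) (c : ℝ≥0∞) (hc : c < volume E) :
    ∃ k, ∀ p, mpCell k p = mpCell k x → c ≤ volume (E ∩ {l | (l, p.1 - l * p.2) ∈ O}) := by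
  let L : ℕ → Set ℝ := fun k => E ∩ {l | ∀ p, mpCell k p = mpCell k x → (l, p.1 - l * p.2) ∈ O}
  have hmono : Monotone L := by
    intro j k hjk l hl
    exact ⟨hl.1, fun p hp => hl.2 p (mpCell_nest hjk hp)⟩
  have hU : E = ⋃ k, L k := by
    ext l
    rw [mem_iUnion]
    refine ⟨fun hl => ?_, fun ⟨k, hk⟩ => hk.1⟩
    have hcont : Continuous (fun p : ℝ × ℝ => (l, p.1 - l * p.2)) := by fun_prop
    have hop := hO.preimage hcont
    obtain ⟨δ, hδ, hsub⟩ := Metric.isOpen_iff.1 hop x (hx l hl)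
    obtain ⟨k, hk⟩ := exists_pow_lt_of_lt_one hδ (by norm_num : (1/2 : ℝ) < 1)
    exact ⟨k, hl, fun p hp => hsub ((mpCell_dist hp).trans hk)⟩
  rw [hU, hmono.measure_iUnion] at hc
  obtain ⟨k, hk⟩ := lt_iSup_iff.1 hc
  exact ⟨k, fun p hp => hk.le.trans (measure_mono fun l hl => ⟨hl.1, hl.2 p hp⟩)⟩

lemma mp_cover (X : Set (ℝ × ℝ)) (r : ℤ × ℤ) (hXr : ∀ p ∈ X, mpCell 0 p = r)
    (E : Set ℝ) (M : ℕ) (hM : 1 ≤ M) (hE : MeasurableSet E) (hEM : ∀ l ∈ E, |l| ≤ M)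
    (O : Set (ℝ × ℝ)) (hO : IsOpen O) (hXO : ∀ x ∈ X, ∀ l ∈ E, (l, x.1 - l * x.2) ∈ O)
    (c : ℝ≥0∞) (hc : c < volume E) (θ : ℝ) (hθ : 1/4 ≤ θ) :
    ∃ T : Set (ℕ × (ℤ × ℤ)), X ⊆ ⋃ q : T, {p | mpCell q.1.1 p = q.1.2} ∧
      c ^ 2 * ∑' q : T, ENNReal.ofReal (θ ^ q.1.1) ≤
        volume O * (M * (18 * ∑' k : ℕ, ENNReal.ofReal ((2 * θ) ^ k))) := by
  classical
  rcases X.eq_empty_or_nonempty with rfl | hne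
  · exact ⟨∅, by simp, by simp⟩
  let good : ℕ → ℝ × ℝ → Prop := fun k x =>
    ∀ p, mpCell k p = mpCell k x → c ≤ volume (E ∩ {l | (l, p.1 - l * p.2) ∈ O})
  have hgood : ∀ x ∈ X, ∃ k, good k x := fun x hx => mp_local x E O hO (hXO x hx) c hc
  have hgc : ∀ k x y, mpCell k x = mpCell k y → good k x → good k y := by
    intro k x y hxy h p hp
    exact h p (hp.trans hxy.symm)
  let kk : ℝ × ℝ → ℕ := fun x => sInf {k | good k x}
  have hkk : ∀ x ∈ X, good (kk x) x := fun x hx => Nat.sInf_mem (hgood x hx)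
  have hkeq : ∀ x ∈ X, ∀ p, mpCell (kk x) p = mpCell (kk x) x → kk p = kk x := by
    intro x hx p hp
    have h1 : good (kk x) p := hgc _ _ _ hp.symm (hkk x hx)
    have h2 : kk p ≤ kk x := Nat.sInf_le h1
    have h3 : good (kk p) p := Nat.sInf_mem (s := {k | good k p}) ⟨_, h1⟩
    exact le_antisymm h2 (Nat.sInf_le (hgc _ _ _ (mpCell_nest h2 hp) h3))
  obtain ⟨x, hxX, hxs⟩ : ∃ x : ℕ → ℝ × ℝ, (∀ i, x i ∈ X) ∧
      ∀ y ∈ X, ∃ i, kk y = kk (x i) ∧ mpCell (kk y) y = mpCell (kk y) (x i) := by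
    obtain ⟨f, hf⟩ := (Set.to_countable ((fun y => (kk y, mpCell (kk y) y)) '' X)).exists_eq_range
      (hne.image _)
    have : ∀ i, ∃ y ∈ X, (kk y, mpCell (kk y) y) = f i := by
      intro i
      have : f i ∈ (fun y => (kk y, mpCell (kk y) y)) '' X := by rw [hf]; exact mem_range_self i
      exact this
    choose x hx hxf using this
    refine ⟨x, hx, fun y hy => ?_⟩
    have : (kk y, mpCell (kk y) y) ∈ range f := by rw [← hf]; exact mem_image_of_mem _ hy
    obtain ⟨i, hi⟩ := this
    refine ⟨i, ?_⟩
    rw [← hxf i, Prod.mk.injEq] at hi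
    refine ⟨hi.1.symm, ?_⟩
    rw [← hi.2, hi.1]
  let A : ℕ → Finset (ℕ × (ℤ × ℤ)) := fun i =>
    (Finset.range (kk (x i) + 1)).image (fun k => (k, mpCell k (x i)))
  have hAmem : ∀ i q, q ∈ A i ↔ q.1 ≤ kk (x i) ∧ mpCell q.1 (x i) = q.2 := by
    intro i q
    simp only [A, Finset.mem_image, Finset.mem_range, Nat.lt_succ_iff]
    constructor
    · rintro ⟨k, hk, rfl⟩; exact ⟨hk, rfl⟩
    · rintro ⟨h1, h2⟩; exact ⟨q.1, h1, by rw [h2]⟩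
  have hAne : ∀ i, (A i).Nonempty := fun i => ⟨(0, mpCell 0 (x i)), by rw [hAmem]; simp⟩
  have hθ0 : 0 ≤ θ := by linarith
  obtain ⟨a, ha0, hale, hasat⟩ := mp_greedy A hAne (fun q => θ ^ q.1) (fun q => by positivity)
  let T0 : Set (ℕ × (ℤ × ℤ)) :=
    {q | ∃ i, q ∈ A i ∧ ∑ j ∈ Finset.range (i+1), (if q ∈ A j then a j else 0) = θ ^ q.1}
  let T : Set (ℕ × (ℤ × ℤ)) :=
    {q | q ∈ T0 ∧ ∀ p, mpCell q.1 p = q.2 → ∀ k < q.1, (k, mpCell k p) ∉ T0}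
  refine ⟨T, ?_, ?_⟩
  · intro y hy
    obtain ⟨i, hi1, hi2⟩ := hxs y hy
    obtain ⟨q, hq, hs⟩ := hasat i
    have hq' := (hAmem i q).1 hq
    have hex : ∃ k, (k, mpCell k y) ∈ T0 := by
      refine ⟨q.1, ?_⟩
      have : mpCell q.1 y = q.2 := by
        rw [← hq'.2]
        exact mpCell_nest (hi1 ▸ hq'.1) hi2
      rw [this]
      exact ⟨i, hq, hs⟩
    rw [mem_iUnion]
    refine ⟨⟨(Nat.find hex, mpCell (Nat.find hex) y), Nat.find_spec hex, ?_⟩, rfl⟩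
    intro p hp k hk
    have hp' : mpCell k p = mpCell k y := mpCell_nest (le_of_lt hk) hp
    rw [hp']
    exact Nat.find_min hex hk
  have hsumofReal : ∀ N q, ∑ i ∈ Finset.range N, ENNReal.ofReal (if q ∈ A i then a i else 0)
      ≤ ENNReal.ofReal (θ ^ q.1) := by
    intro N q
    rw [← ENNReal.ofReal_sum_of_nonneg]
    · exact ENNReal.ofReal_le_ofReal (hale q N)
    · intro i _
      split_ifs
      · exact ha0 i
      · exact le_rfl
  have hmass : ∀ N, c ^ 2 * ENNReal.ofReal (∑ i ∈ Finset.range N, a i) ≤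
      volume O * (M * (18 * ∑' k : ℕ, ENNReal.ofReal ((2 * θ) ^ k))) := by
    intro N
    let S : ℕ → Set (ℝ × ℝ) := fun i => {p | mpCell (kk (x i)) p = mpCell (kk (x i)) (x i)}
    have hSm : ∀ i, MeasurableSet (S i) := fun i => mpCell_meas _ (measurableSet_singleton _)
    let g : ℝ × ℝ → ℝ≥0∞ := fun p => ∑ i ∈ Finset.range N,
      ENNReal.ofReal (a i * 4 ^ kk (x i)) * indicator (S i) 1 p
    have hg1 : ∀ i, Measurable (fun p => ENNReal.ofReal (a i * 4 ^ kk (x i)) *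
        indicator (S i) (1 : ℝ × ℝ → ℝ≥0∞) p) :=
      fun i => (measurable_one.indicator (hSm i)).const_mul _
    have hg : Measurable g := Finset.measurable_fun_sum _ (fun i _ => hg1 i)
    have hgS : ∀ p, g p ≠ 0 → ∃ i, p ∈ S i := by
      intro p hp
      obtain ⟨i, -, hi⟩ := Finset.exists_ne_zero_of_sum_ne_zero hp
      refine ⟨i, ?_⟩
      by_contra h
      simp [indicator_of_notMem h] at hi
    have hsetint : ∀ Q : Set (ℝ × ℝ), MeasurableSet Q → ∫⁻ p in Q, g p = ∑ i ∈ Finset.range N,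
        ENNReal.ofReal (a i * 4 ^ kk (x i)) * volume (S i ∩ Q) := by
      intro Q hQ
      rw [lintegral_finsetSum _ (fun i _ => hg1 i)]
      apply Finset.sum_congr rfl
      intro i _
      rw [lintegral_const_mul _ (measurable_one.indicator (hSm i)), lintegral_indicator_one (hSm i),
        Measure.restrict_apply (hSm i)]
    have hone : ∀ i, ENNReal.ofReal (a i * 4 ^ kk (x i)) * volume (S i) = ENNReal.ofReal (a i) := by
      intro i
      rw [mpCell_vol, ← ENNReal.ofReal_mul (mul_nonneg (ha0 i) (by positivity)), mul_assoc,
        ← mul_pow]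
      norm_num
    have hgint : ∫⁻ p, g p = ENNReal.ofReal (∑ i ∈ Finset.range N, a i) := by
      rw [← setLIntegral_univ, hsetint _ .univ, ENNReal.ofReal_sum_of_nonneg (fun i _ => ha0 i)]
      apply Finset.sum_congr rfl
      intro i _
      rw [inter_univ, hone]
    rw [← hgint]
    refine mp_mass g hg r ?_ M hM θ ?_ E hE hEM O hO.measurableSet c ?_ ?_
    · intro p hp
      obtain ⟨i, hi⟩ := hgS p hp
      rw [mpCell_nest (Nat.zero_le _) hi, hXr _ (hxX i)]
    · intro k q
      have hQm : MeasurableSet {p | mpCell k p = q} := mpCell_meas _ (measurableSet_singleton _)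
      rw [hsetint _ hQm]
      by_cases hcase : ∃ i0, kk (x i0) ≤ k ∧ (S i0 ∩ {p | mpCell k p = q}).Nonempty
      · obtain ⟨i0, hk0, p0, hp0, hp0q⟩ := hcase
        calc _ ≤ ∑ i ∈ Finset.range N, ENNReal.ofReal (4 ^ kk (x i0) * (1/4) ^ k) *
              ENNReal.ofReal (if (kk (x i0), mpCell (kk (x i0)) (x i0)) ∈ A i then a i else 0) := by
              apply Finset.sum_le_sum
              intro i _
              rcases (S i ∩ {p | mpCell k p = q}).eq_empty_or_nonempty with he | ⟨p, hp, hpq⟩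
              · rw [he]; simp
              have e1 : mpCell k p = mpCell k p0 := Eq.trans hpq (Eq.symm hp0q)
              have e2 : mpCell (kk (x i0)) p = mpCell (kk (x i0)) (x i0) :=
                (mpCell_nest hk0 e1).trans hp0
              have e3 := hkeq _ (hxX i0) p e2
              have e4 := hkeq _ (hxX i) p hp
              have e5 : kk (x i) = kk (x i0) := e4.symm.trans e3
              have hmem : (kk (x i0), mpCell (kk (x i0)) (x i0)) ∈ A i := by
                rw [hAmem]
                refine ⟨e5.ge, ?_⟩
                rw [← e2, ← e5]
                exact Eq.symm hp
              rw [if_pos hmem, e5]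
              calc _ ≤ ENNReal.ofReal (a i * 4 ^ kk (x i0)) * volume {p | mpCell k p = q} := by
                    gcongr
                    exact inter_subset_right
                _ = _ := by
                    rw [mpCell_vol, ← ENNReal.ofReal_mul (mul_nonneg (ha0 i) (by positivity)),
                      ← ENNReal.ofReal_mul (by positivity)]
                    congr 1
                    ring
          _ ≤ ENNReal.ofReal (4 ^ kk (x i0) * (1/4) ^ k) * ENNReal.ofReal (θ ^ kk (x i0)) := by
              rw [← Finset.mul_sum]
              gcongr
              exact hsumofReal N (kk (x i0), mpCell (kk (x i0)) (x i0))
          _ ≤ ENNReal.ofReal (θ ^ k) := by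
              rw [← ENNReal.ofReal_mul (by positivity)]
              apply ENNReal.ofReal_le_ofReal
              have h4 : (4 * θ) ^ kk (x i0) ≤ (4 * θ) ^ k := pow_le_pow_right₀ (by linarith) hk0
              calc 4 ^ kk (x i0) * (1/4) ^ k * θ ^ kk (x i0) = (4 * θ) ^ kk (x i0) * (1/4) ^ k := by
                    rw [mul_pow]; ring
                _ ≤ (4 * θ) ^ k * (1/4) ^ k := by gcongr
                _ = θ ^ k := by rw [← mul_pow]; congr 1; ring
      · push Not at hcase
        refine le_trans ?_ (hsumofReal N (k, q))
        apply Finset.sum_le_sum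
        intro i _
        rcases (S i ∩ {p | mpCell k p = q}).eq_empty_or_nonempty with he | ⟨p, hp, hpq⟩
        · rw [he]; simp
        have hk : k < kk (x i) := by
          by_contra hcon
          have := hcase i (not_lt.1 hcon)
          exact (this ▸ (⟨hp, hpq⟩ : p ∈ S i ∩ {p | mpCell k p = q}) : p ∈ (∅ : Set (ℝ × ℝ)))
        have hmem : (k, q) ∈ A i := by
          rw [hAmem]
          exact ⟨hk.le, (mpCell_nest hk.le (Eq.symm hp)).trans hpq⟩
        rw [if_pos hmem, ← hone i]
        gcongr
        exact inter_subset_left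
    · intro p hp
      obtain ⟨i, hi⟩ := hgS p hp
      exact hkk _ (hxX i) p hi
    · rw [hgint]; exact ENNReal.ofReal_ne_top
  rw [ENNReal.tsum_eq_iSup_sum, ENNReal.mul_iSup]
  refine iSup_le fun F => ?_
  have hidx : ∀ q : T, ∃ i, ∀ N, i < N →
      θ ^ q.1.1 ≤ ∑ j ∈ Finset.range N, (if q.1 ∈ A j then a j else 0) := by
    rintro ⟨q, ⟨i, hi, hs⟩, -⟩
    refine ⟨i, fun N hN => ?_⟩
    refine le_trans hs.ge ?_
    apply Finset.sum_le_sum_of_subset_of_nonneg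
    · exact Finset.range_subset_range.2 hN
    · intro j _ _
      split_ifs
      · exact ha0 j
      · exact le_rfl
  choose idx hidx using hidx
  obtain ⟨N, hN⟩ : ∃ N, ∀ q ∈ F, idx q < N :=
    ⟨F.sup idx + 1, fun q hq => Nat.lt_succ_of_le (Finset.le_sup hq)⟩
  refine le_trans ?_ (hmass N)
  gcongr
  rw [← ENNReal.ofReal_sum_of_nonneg (fun q _ => by positivity)]
  apply ENNReal.ofReal_le_ofReal
  calc ∑ q ∈ F, θ ^ q.1.1
      ≤ ∑ q ∈ F, ∑ j ∈ Finset.range N, (if q.1 ∈ A j then a j else 0) :=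
        Finset.sum_le_sum fun q hq => hidx q N (hN q hq)
    _ = ∑ j ∈ Finset.range N, ∑ q ∈ F, (if q.1 ∈ A j then a j else 0) := Finset.sum_comm
    _ ≤ ∑ j ∈ Finset.range N, a j := by
        apply Finset.sum_le_sum
        intro j _
        rw [← Finset.sum_filter, Finset.sum_const, nsmul_eq_mul]
        have hcard : (F.filter (fun q => q.1 ∈ A j)).card ≤ 1 := by
          rw [Finset.card_le_one]
          have key : ∀ q q' : T, q.1 ∈ A j → q'.1 ∈ A j → ¬ q.1.1 < q'.1.1 := by
            intro q q' hq hq' hlt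
            have h1 := (hAmem j _).1 hq
            have h2 := (hAmem j _).1 hq'
            have := q'.2.2 (x j) h2.2 q.1.1 hlt
            rw [h1.2] at this
            exact this q.2.1
          intro q hq q' hq'
          have m1 := (Finset.mem_filter.1 hq).2
          have m2 := (Finset.mem_filter.1 hq').2
          have e : q.1.1 = q'.1.1 := le_antisymm (not_lt.1 (key q' q m2 m1)) (not_lt.1 (key q q' m1 m2))
          apply Subtype.ext
          apply Prod.ext e
          rw [← ((hAmem j _).1 m1).2, ← ((hAmem j _).1 m2).2, e]
        have : ((F.filter (fun q => q.1 ∈ A j)).card : ℝ) ≤ 1 := by exact_mod_cast hcard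
        nlinarith [ha0 j]

lemma mp_theta (s : ℝ) (hs1 : 1 < s) (hs2 : s ≤ 2) :
    1/4 ≤ (1/2 : ℝ) ^ s ∧ (1/2 : ℝ) ^ s < 1/2 := by
  constructor
  · have h : (1/2 : ℝ) ^ (2:ℝ) ≤ (1/2 : ℝ) ^ s :=
      Real.rpow_le_rpow_of_exponent_ge (by norm_num) (by norm_num) hs2
    have h2 : (1/2 : ℝ) ^ (2:ℝ) = 1/4 := by
      rw [Real.rpow_two]; norm_num
    rwa [h2] at h
  · have h : (1/2 : ℝ) ^ s < (1/2 : ℝ) ^ (1:ℝ) :=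
      Real.rpow_lt_rpow_of_exponent_gt (by norm_num) (by norm_num) hs1
    rwa [Real.rpow_one] at h

lemma mp_diam (s : ℝ) (hs0 : 0 < s) (θ : ℝ) (hθ : θ = (1/2 : ℝ) ^ s) (k : ℕ) (m : ℤ × ℤ) :
    Metric.ediam {p | mpCell k p = m} ^ s ≤ ENNReal.ofReal (θ ^ k) := by
  have h1 : Metric.ediam {p | mpCell k p = m} ≤ ENNReal.ofReal ((1/2) ^ k) := by
    apply Metric.ediam_le
    intro p hp p' hp'
    rw [edist_dist]
    exact ENNReal.ofReal_le_ofReal (mpCell_dist (Eq.trans hp (Eq.symm hp'))).le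
  refine (ENNReal.rpow_le_rpow h1 hs0.le).trans (le_of_eq ?_)
  rw [ENNReal.ofReal_rpow_of_nonneg (by positivity) hs0.le, hθ, ← Real.rpow_natCast,
    ← Real.rpow_natCast, ← Real.rpow_mul (by norm_num), ← Real.rpow_mul (by norm_num),
    mul_comm]

lemma mp_hh1 (s : ℝ) (hs0 : 0 < s) 
    (e : ℕ → ℝ≥0∞) (hlim : Filter.Tendsto e Filter.atTop (𝓝 0)) : Filter.Tendsto (fun n => (e n) ^ (1 / s)) Filter.atTop (𝓝 0) := by
    have h := (ENNReal.continuous_rpow_const (y := 1/s)).tendsto 0 |>.comp hlim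
    rw [ENNReal.zero_rpow_of_pos (by positivity)] at h
    exact h

lemma mp_hh2 {ι : Type} (s : ℝ) (hs0 : 0 < s) (T : ℕ → Set ι) (w : ι → ℝ≥0∞) (d : ι → ℝ≥0∞) (e : ℕ → ℝ≥0∞) (hD : ∀ q, d q ^ s ≤ w q)
    (hsum : ∀ n, ∑' q : T n, w q.1 ≤ e n) : ∀ n, ∀ q : T n, d q.1 ≤ (e n) ^ (1 / s) := by
    intro n q
    rw [one_div, ENNReal.le_rpow_inv_iff hs0]
    exact (hD q.1).trans ((ENNReal.le_tsum (f := fun q : T n => w q.1) q).trans (hsum n))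

lemma mp_hh3 {ι : Type} (s : ℝ) (T : ℕ → Set ι) (w : ι → ℝ≥0∞) (d : ι → ℝ≥0∞) (e : ℕ → ℝ≥0∞) (hD : ∀ q, d q ^ s ≤ w q)
  (hlim : Filter.Tendsto e Filter.atTop (𝓝 0)) 
    (hsum : ∀ n, ∑' q : T n, w q.1 ≤ e n) : Filter.Tendsto (fun n : ℕ => ∑' q : T n,
      d q.1 ^ s) Filter.atTop (𝓝 0) :=
    tendsto_of_tendsto_of_tendsto_of_le_of_le tendsto_const_nhds hlim (fun n => zero_le)
      (fun n => (ENNReal.tsum_le_tsum fun q : T n => hD q.1).trans (hsum n))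

lemma mp_hh4 {Y ι : Type} [EMetricSpace Y] [MeasurableSpace Y] [BorelSpace Y] [Countable ι]
    (X : Set Y) (s : ℝ)  
    (D : ι → Set Y) 
    (e : ℕ → ℝ≥0∞) (hlim : Filter.Tendsto e Filter.atTop (𝓝 0))
    (T : ℕ → Set ι) (hT : ∀ n, X ⊆ ⋃ q : T n, D q.1)
    (hdd : ∀ n, ∀ q : T n, Metric.ediam (D q.1) ≤ (e n)) 
  (hlim2 : Filter.Tendsto (fun n : ℕ => ∑' q : T n,
      Metric.ediam (D q.1) ^ s) Filter.atTop (𝓝 0)) : μH[s] X = 0 := by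
  have hle := Measure.hausdorffMeasure_le_liminf_tsum s X (l := Filter.atTop)
    e hlim
    (fun n (q : T n) => D q.1)
    (Filter.Eventually.of_forall hdd)
    (Filter.Eventually.of_forall fun n => hT n)
  rw [hlim2.liminf_eq] at hle
  exact le_antisymm hle zero_le

lemma mp_haus (X : Set (ℝ × ℝ)) (s : ℝ) (hs0 : 0 < s) (w : ℕ × (ℤ × ℤ) → ℝ≥0∞)
    (D : ℕ × (ℤ × ℤ) → Set (ℝ × ℝ)) (hD : ∀ q, Metric.ediam (D q) ^ s ≤ w q)
    (e : ℕ → ℝ≥0∞) (hlim : Filter.Tendsto e Filter.atTop (𝓝 0))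
    (T : ℕ → Set (ℕ × (ℤ × ℤ))) (hT : ∀ n, X ⊆ ⋃ q : T n, D q.1)
    (hsum : ∀ n, ∑' q : T n, w q.1 ≤ e n) : μH[s] X = 0 :=
  mp_hh4 X s D (fun n => (e n) ^ (1 / s)) (mp_hh1 s hs0 e hlim) T hT
    (mp_hh2 s hs0 T w (fun q => Metric.ediam (D q)) e hD hsum)
    (mp_hh3 s T w (fun q => Metric.ediam (D q)) e hD hlim hsum)

lemma mp_step (X : Set (ℝ × ℝ)) (r : ℤ × ℤ) (hXr : ∀ p ∈ X, mpCell 0 p = r)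
    (E : Set ℝ) (M : ℕ) (hM : 1 ≤ M) (hE : MeasurableSet E) (hEM : ∀ l ∈ E, |l| ≤ M)
    (hnull : volume {z : ℝ × ℝ | z.1 ∈ E ∧ ∃ p ∈ X, z.2 = p.1 - z.1 * p.2} = 0)
    (c : ℝ≥0∞) (hc : c < volume E) (hcne : c ^ 2 ≠ 0) (hcT : c ^ 2 ≠ ∞)
    (θ : ℝ) (hθ1 : 1/4 ≤ θ) (C : ℝ≥0∞)
    (hC : C = M * (18 * ∑' k : ℕ, ENNReal.ofReal ((2 * θ) ^ k))) (n : ℕ) :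
    ∃ T : Set (ℕ × (ℤ × ℤ)), X ⊆ ⋃ q : T, {p | mpCell q.1.1 p = q.1.2} ∧
      ∑' q : T, ENNReal.ofReal (θ ^ q.1.1) ≤ (n : ℝ≥0∞)⁻¹ * C / c ^ 2 := by
  obtain ⟨O, hOs, hOo, hOv⟩ := Set.exists_isOpen_lt_of_lt _ ((n : ℝ≥0∞)⁻¹)
    (by rw [hnull]; exact ENNReal.inv_pos.2 (ENNReal.natCast_ne_top n))
  obtain ⟨T, hT, hsum⟩ := mp_cover X r hXr E M hM hE hEM O hOo
    (fun x hx l hl => hOs ⟨hl, x, hx, rfl⟩) c hc θ hθ1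
  refine ⟨T, hT, ?_⟩
  rw [ENNReal.le_div_iff_mul_le (Or.inl hcne) (Or.inl hcT), mul_comm]
  rw [← hC] at hsum
  exact hsum.trans (mul_le_mul_left hOv.le C)

lemma mp_final (X : Set (ℝ × ℝ)) (r : ℤ × ℤ) (hXr : ∀ p ∈ X, mpCell 0 p = r)
    (E : Set ℝ) (M : ℕ) (hM : 1 ≤ M) (hE : MeasurableSet E) (hEM : ∀ l ∈ E, |l| ≤ M)
    (hE0 : volume E ≠ 0)
    (hnull : volume {z : ℝ × ℝ | z.1 ∈ E ∧ ∃ p ∈ X, z.2 = p.1 - z.1 * p.2} = 0)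
    (s : ℝ) (hs1 : 1 < s) (hs2 : s ≤ 2) : μH[s] X = 0 := by
  have hth := mp_theta s hs1 hs2
  obtain ⟨θ, hθ⟩ : ∃ θ : ℝ, θ = (1/2 : ℝ) ^ s := ⟨_, rfl⟩
  rw [← hθ] at hth
  obtain ⟨hθ1, hθ2⟩ := hth
  obtain ⟨C, hC⟩ : ∃ C : ℝ≥0∞, C = M * (18 * ∑' k : ℕ, ENNReal.ofReal ((2 * θ) ^ k)) := ⟨_, rfl⟩
  have hCtop : C ≠ ∞ := by
    rw [hC]
    apply ENNReal.mul_ne_top (ENNReal.natCast_ne_top M)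
    apply ENNReal.mul_ne_top (by norm_num)
    exact (summable_geometric_of_lt_one (by linarith) (by linarith)).tsum_ofReal_ne_top
  obtain ⟨c, hc0, hc⟩ := exists_between (pos_iff_ne_zero.2 hE0)
  have hcne : c ^ 2 ≠ 0 := pow_ne_zero _ hc0.ne'
  have hcT : c ^ 2 ≠ ∞ := ENNReal.pow_ne_top hc.ne_top
  choose T hT hsum using mp_step X r hXr E M hM hE hEM hnull c hc hcne hcT θ hθ1 C hC
  have hlim : Filter.Tendsto (fun n : ℕ => (n : ℝ≥0∞)⁻¹ * C / c ^ 2) Filter.atTop (𝓝 0) := by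
    have h1 := ENNReal.Tendsto.mul_const (b := C / c ^ 2) ENNReal.tendsto_inv_nat_nhds_zero
      (Or.inr (ENNReal.div_ne_top hCtop hcne))
    simpa [mul_div_assoc] using h1
  exact mp_haus X s (by linarith) (fun q => ENNReal.ofReal (θ ^ q.1))
    (fun q => {p | mpCell q.1 p = q.2}) (fun q => mp_diam s (by linarith) θ hθ q.1 q.2)
    _ hlim T hT hsum

theorem stmt_2 (X : Set (ℝ × ℝ)) (hX : MeasurableSet X) (hd : 1 < dimH X) :
    ∀ᵐ l : ℝ, 0 < volume ((fun p : ℝ × ℝ => p.1 - l * p.2) '' X) := by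
  apply mp_main_red X hX
  intro E M hE hEM hE0 hnull
  obtain ⟨d, hd1, hd2⟩ := ENNReal.lt_iff_exists_nnreal_btwn.1
    (lt_min hd (by norm_num : (1:ℝ≥0∞) < 2))
  have hH : μH[(d : ℝ)] X = ∞ := hausdorffMeasure_of_lt_dimH (hd2.trans_le (min_le_left _ _))
  have hs1 : (1:ℝ) < d := by
    have : (1 : NNReal) < d := by exact_mod_cast hd1
    exact_mod_cast this
  have hs2 : (d:ℝ) ≤ 2 := by
    have h := (hd2.trans_le (min_le_right _ _)).le
    have : d ≤ (2 : NNReal) := by exact_mod_cast h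
    exact_mod_cast this
  have h0 : μH[(d : ℝ)] X = 0 := by
    have hsub : X ⊆ ⋃ r : ℤ × ℤ, X ∩ {p | mpCell 0 p = r} := fun p hp =>
      mem_iUnion.2 ⟨mpCell 0 p, hp, rfl⟩
    refine measure_mono_null hsub (measure_iUnion_null fun r => ?_)
    refine mp_final _ r (fun p hp => hp.2) E (M + 1) (by omega) hE
      (fun l hl => (hEM l hl).trans (by push_cast; linarith)) hE0 ?_ d hs1 hs2
    refine measure_mono_null ?_ hnull
    rintro z ⟨h1, p, hp, h2⟩
    exact ⟨h1, p, hp.1, h2⟩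
  rw [h0] at hH
  exact ENNReal.zero_ne_top hH
end

section
/- If K₁ and K₂ are Borel subsets of ℝ with HD(K₁) + HD(K₂) > 1, then for Lebesgue-almost every λ ∈ ℝ, the set K₁ - λK₂ = {x - λy : x ∈ K₁, y ∈ K₂} has positive Lebesgue measure. -/
open MeasureTheory Set
open scoped ENNReal

namespace Mars

/-- dyadic cell of generation `p.1` and index `p.2` -/
def cell (p : ℕ × ℤ) : Set ℝ := {x | ⌊(2:ℝ) ^ p.1 * x⌋ = p.2}

noncomputable def w (q : ℝ≥0∞) : Measure (ℕ × ℤ) :=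
  Measure.count.withDensity (fun p => q ^ p.1)

noncomputable def M (q : ℝ≥0∞) (E : Set ℝ) : ℝ≥0∞ :=
  ⨅ (S : Set (ℕ × ℤ)) (_ : E ⊆ ⋃ p ∈ S, cell p), w q S

lemma floor_half (n : ℕ) (x : ℝ) : ⌊(2:ℝ) ^ n * x⌋ = ⌊(2:ℝ) ^ (n+1) * x⌋ / 2 := by
  have : (2:ℝ) ^ n * x = ((2:ℝ) ^ (n+1) * x) / ((2:ℕ):ℝ) := by
    push_cast; rw [pow_succ]; ring
  rw [this, Int.floor_div_natCast]; rfl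

lemma cell_eq_Ico (p : ℕ × ℤ) :
    cell p = Ico ((p.2:ℝ) / 2 ^ p.1) ((p.2 + 1 : ℝ) / 2 ^ p.1) := by
  ext x
  have h : (0:ℝ) < 2 ^ p.1 := by positivity
  simp only [cell, mem_ofPred_eq, Int.floor_eq_iff, mem_Ico, div_le_iff₀ h, lt_div_iff₀ h]
  rw [mul_comm]

lemma volume_cell (p : ℕ × ℤ) : volume (cell p) = (2⁻¹ : ℝ≥0∞) ^ p.1 := by
  rw [cell_eq_Ico, Real.volume_Ico]
  have : (p.2 + 1 : ℝ) / 2 ^ p.1 - (p.2:ℝ) / 2 ^ p.1 = (2⁻¹ : ℝ) ^ p.1 := by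
    rw [inv_pow]; ring
  rw [this, ENNReal.ofReal_pow (by positivity), ENNReal.ofReal_inv_of_pos (by norm_num)]
  simp

lemma floor_mono {m n : ℕ} (h : m ≤ n) {x y : ℝ} (hxy : ⌊(2:ℝ) ^ n * x⌋ = ⌊(2:ℝ) ^ n * y⌋) :
    ⌊(2:ℝ) ^ m * x⌋ = ⌊(2:ℝ) ^ m * y⌋ := by
  induction n, h using Nat.le_induction with
  | base => exact hxy
  | succ n hn ih =>
    apply ih
    rw [floor_half, floor_half n y, hxy]

lemma cell_subset {p r : ℕ × ℤ} (h : r.1 ≤ p.1) {x : ℝ} (hp : x ∈ cell p) (hr : x ∈ cell r) :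
    cell p ⊆ cell r := by
  intro y hy
  simp only [cell, mem_ofPred_eq] at *
  rw [← hr]
  exact floor_mono h (hy.trans hp.symm)

lemma cell_inj {p r : ℕ × ℤ} (h : r.1 = p.1) {x : ℝ} (hp : x ∈ cell p) (hr : x ∈ cell r) :
    p = r := by
  simp only [cell, mem_ofPred_eq] at *
  ext
  · exact h.symm
  · rw [← hr, ← hp, h]

lemma cell_nonempty (p : ℕ × ℤ) : (cell p).Nonempty :=
  ⟨(p.2:ℝ) / 2 ^ p.1, by
    have h : (0:ℝ) < 2 ^ p.1 := by positivity
    simp [cell, mul_div_cancel₀, h.ne']⟩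

lemma mem_cell (n : ℕ) (x : ℝ) : x ∈ cell (n, ⌊(2:ℝ) ^ n * x⌋) := rfl

lemma cell_split (n : ℕ) (k : ℤ) : cell (n, k) = cell (n+1, 2*k) ∪ cell (n+1, 2*k+1) := by
  ext x
  simp only [cell, mem_ofPred_eq, mem_union]
  rw [floor_half]
  omega

lemma cell_split_disj (n : ℕ) (k : ℤ) : Disjoint (cell (n+1, 2*k)) (cell (n+1, 2*k+1)) := by
  rw [Set.disjoint_left]
  intro x h1 h2
  simp only [cell, mem_ofPred_eq] at *
  omega

lemma w_eq_tsum (q : ℝ≥0∞) (S : Set (ℕ × ℤ)) : w q S = ∑' p : S, q ^ p.1.1 := by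
  rw [w, withDensity_apply _ (MeasurableSet.of_discrete), lintegral_countable _ S.to_countable]
  simp

lemma w_singleton (q : ℝ≥0∞) (p : ℕ × ℤ) : w q {p} = q ^ p.1 := by
  rw [w_eq_tsum]; simp

lemma le_w {q : ℝ≥0∞} {S : Set (ℕ × ℤ)} {p : ℕ × ℤ} (h : p ∈ S) : q ^ p.1 ≤ w q S := by
  rw [← w_singleton]; exact measure_mono (by simpa using h)

lemma M_le {q : ℝ≥0∞} {E : Set ℝ} {S : Set (ℕ × ℤ)} (h : E ⊆ ⋃ p ∈ S, cell p) :
    M q E ≤ w q S :=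
  iInf₂_le (f := fun (S : Set (ℕ × ℤ)) (_ : E ⊆ ⋃ p ∈ S, cell p) => w q S) S h

lemma le_M_add {q a : ℝ≥0∞} {A B : Set ℝ} (h : ∀ S T : Set (ℕ × ℤ), A ⊆ (⋃ p ∈ S, cell p) →
    B ⊆ (⋃ p ∈ T, cell p) → a ≤ w q S + w q T) : a ≤ M q A + M q B := by
  simp only [M, ENNReal.iInf_add, ENNReal.add_iInf]
  exact le_iInf₂ fun T hT => le_iInf₂ fun S hS => h _ _ (by assumption) (by assumption)

lemma M_mono (q : ℝ≥0∞) {E F : Set ℝ} (h : E ⊆ F) : M q E ≤ M q F :=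
  le_iInf₂ fun _ hS => M_le (h.trans hS)

lemma M_cell_le {q : ℝ≥0∞} (p : ℕ × ℤ) : M q (cell p) ≤ q ^ p.1 := by
  rw [← w_singleton]; exact M_le (by simp)

lemma M_inter_cell_le {q : ℝ≥0∞} (E : Set ℝ) (p : ℕ × ℤ) : M q (E ∩ cell p) ≤ q ^ p.1 :=
  (M_mono q inter_subset_right).trans (M_cell_le p)

lemma M_union_le (q : ℝ≥0∞) (E F : Set ℝ) : M q (E ∪ F) ≤ M q E + M q F := by
  refine le_M_add fun S T hS hT => ?_
  refine (M_le (S := S ∪ T) ?_).trans (measure_union_le _ _)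
  rw [biUnion_union]; exact union_subset_union hS hT

/-- every cell in a family lies in a maximal one -/
lemma exists_max (Z : Set (ℕ × ℤ)) {x : ℝ} {p : ℕ × ℤ} (hp : p ∈ Z) (hx : x ∈ cell p) :
    ∃ r ∈ Z, x ∈ cell r ∧ ∀ r' ∈ Z, r'.1 < r.1 → ¬ cell r ⊆ cell r' := by
  classical
  have hex : ∃ n, ∃ r ∈ Z, x ∈ cell r ∧ r.1 = n := ⟨_, p, hp, hx, rfl⟩
  obtain ⟨r, hr, hxr, hn⟩ := Nat.find_spec hex
  refine ⟨r, hr, hxr, fun r' hr' hlt hsub => ?_⟩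
  rw [hn] at hlt
  exact Nat.find_min hex hlt ⟨r', hr', hsub hxr, rfl⟩

/-- strong subadditivity -/
lemma M_strong (q : ℝ≥0∞) (A B : Set ℝ) : M q (A ∪ B) + M q (A ∩ B) ≤ M q A + M q B := by
  refine le_M_add fun S T hS hT => ?_
  set S' : Set (ℕ × ℤ) := {r | r ∈ S ∪ T ∧ ∀ r' ∈ S ∪ T, r'.1 < r.1 → ¬ cell r ⊆ cell r'} with hS'
  set T' : Set (ℕ × ℤ) := (S ∪ T) \ S' with hT'
  have h1 : M q (A ∪ B) ≤ w q S' := by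
    refine M_le fun x hx => ?_
    have : ∃ p ∈ S ∪ T, x ∈ cell p := by
      rcases hx with hx | hx
      · obtain ⟨p, hp, h⟩ := mem_iUnion₂.1 (hS hx)
        exact ⟨p, Or.inl hp, h⟩
      · obtain ⟨p, hp, h⟩ := mem_iUnion₂.1 (hT hx)
        exact ⟨p, Or.inr hp, h⟩
    obtain ⟨p, hp, hxp⟩ := this
    obtain ⟨r, hr, hxr, hmax⟩ := exists_max _ hp hxp
    exact mem_iUnion₂.2 ⟨r, ⟨hr, hmax⟩, hxr⟩
  have h2 : M q (A ∩ B) ≤ w q (T' ∪ (S ∩ T)) := by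
    refine M_le fun x hx => ?_
    obtain ⟨p, hp, hxp⟩ := mem_iUnion₂.1 (hS hx.1)
    obtain ⟨r, hr, hxr⟩ := mem_iUnion₂.1 (hT hx.2)
    rcases lt_trichotomy p.1 r.1 with h | h | h
    · exact mem_iUnion₂.2 ⟨r, Or.inl ⟨Or.inr hr, fun hh => hh.2 p (Or.inl hp) h
        (cell_subset h.le hxr hxp)⟩, hxr⟩
    · have := cell_inj h hxr hxp
      subst this
      exact mem_iUnion₂.2 ⟨r, Or.inr ⟨hp, hr⟩, hxr⟩
    · exact mem_iUnion₂.2 ⟨p, Or.inl ⟨Or.inl hp, fun hh => hh.2 r (Or.inr hr) h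
        (cell_subset h.le hxp hxr)⟩, hxp⟩
  have h3 : w q S' + w q T' = w q (S ∪ T) := by
    have : S' ⊆ S ∪ T := fun r hr => hr.1
    rw [hT', measure_add_sdiff MeasurableSet.of_discrete.nullMeasurableSet, union_eq_self_of_subset_left this]
  calc _ ≤ w q S' + w q (T' ∪ (S ∩ T)) := add_le_add h1 h2
    _ ≤ w q S' + (w q T' + w q (S ∩ T)) := by gcongr; exact measure_union_le _ _
    _ = w q S + w q T := by
      rw [← add_assoc, h3, measure_union_add_inter _ MeasurableSet.of_discrete]

lemma M_cell {q : ℝ≥0∞} (hq : q ≤ 1) (hq2 : 2⁻¹ ≤ q) (p : ℕ × ℤ) : q ^ p.1 ≤ M q (cell p) := by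
  refine le_iInf₂ fun S hS => ?_
  have key : ∀ r : ℕ × ℤ, q ^ p.1 * 2 ^ p.1 * volume (cell r ∩ cell p) ≤ q ^ r.1 := by
    intro r
    rcases le_total r.1 p.1 with h | h
    · calc _ ≤ q ^ p.1 * 2 ^ p.1 * volume (cell p) := by gcongr; exact inter_subset_right
        _ = q ^ p.1 := by
          rw [volume_cell, mul_assoc, ← mul_pow, ENNReal.mul_inv_cancel (by norm_num) (by norm_num)]
          simp
        _ ≤ q ^ r.1 := pow_le_pow_right_of_le_one' hq h
    · obtain ⟨d, hd⟩ := Nat.exists_eq_add_of_le h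
      calc _ ≤ q ^ p.1 * 2 ^ p.1 * volume (cell r) := by gcongr; exact inter_subset_left
        _ = q ^ p.1 * 2⁻¹ ^ d := by
          rw [volume_cell, hd, pow_add, mul_assoc, ← mul_assoc (2 ^ p.1), ← mul_pow,
            ENNReal.mul_inv_cancel (by norm_num) (by norm_num)]
          simp
        _ ≤ q ^ p.1 * q ^ d := by gcongr
        _ = q ^ r.1 := by rw [hd, pow_add]
  calc q ^ p.1 = q ^ p.1 * 2 ^ p.1 * volume (cell p) := by
          rw [volume_cell, mul_assoc, ← mul_pow, ENNReal.mul_inv_cancel (by norm_num) (by norm_num)]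
          simp
    _ ≤ q ^ p.1 * 2 ^ p.1 * ∑' r : S, volume (cell r ∩ cell p) := by
      gcongr
      refine (measure_mono ?_).trans (measure_iUnion_le _)
      intro x hx
      obtain ⟨r, hr, hxr⟩ := mem_iUnion₂.1 (hS hx)
      exact mem_iUnion.2 ⟨⟨r, hr⟩, hxr, hx⟩
    _ = ∑' r : S, q ^ p.1 * 2 ^ p.1 * volume (cell r ∩ cell p) := by rw [ENNReal.tsum_mul_left]
    _ ≤ ∑' r : S, q ^ r.1.1 := ENNReal.tsum_le_tsum fun r => key r
    _ = w q S := (w_eq_tsum _ _).symm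

lemma M_rec {q : ℝ≥0∞} (hq : q ≤ 1) (A : Set ℝ) (n : ℕ) (k : ℤ) :
    min (q ^ n) (M q (A ∩ cell (n+1, 2*k)) + M q (A ∩ cell (n+1, 2*k+1)))
      ≤ M q (A ∩ cell (n,k)) := by
  refine le_iInf₂ fun S hS => ?_
  by_cases h : ∃ p ∈ S, p.1 ≤ n
  · obtain ⟨p, hp, hpn⟩ := h
    exact (min_le_left _ _).trans ((pow_le_pow_right_of_le_one' hq hpn).trans (le_w hp))
  · push Not at h
    refine (min_le_right _ _).trans ?_
    have hc : ∀ j : ℤ, cell (n+1, j) ⊆ cell (n,k) →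
        M q (A ∩ cell (n+1, j)) ≤ w q {p ∈ S | cell p ⊆ cell (n+1, j)} := by
      intro j hj
      refine M_le fun x hx => ?_
      obtain ⟨p, hp, hxp⟩ := mem_iUnion₂.1 (hS ⟨hx.1, hj hx.2⟩)
      exact mem_iUnion₂.2 ⟨p, ⟨hp, cell_subset (h p hp) hxp hx.2⟩, hxp⟩
    refine (add_le_add (hc (2*k) (by rw [cell_split n k]; exact subset_union_left))
      (hc (2*k+1) (by rw [cell_split n k]; exact subset_union_right))).trans ?_
    rw [← measure_union _ MeasurableSet.of_discrete]
    · refine measure_mono ?_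
      rintro p (hp | hp) <;> exact hp.1
    · rw [Set.disjoint_left]
      intro p h1 h2
      obtain ⟨x, hx⟩ := cell_nonempty p
      exact (Set.disjoint_left.1 (cell_split_disj n k)) (h1.2 hx) (h2.2 hx)

/-- increasing unions of dyadically open sets -/
lemma M_iUnion_open {q : ℝ≥0∞} (hq : q ≤ 1) (hq2 : 2⁻¹ ≤ q) (k₀ : ℤ) (V : ℕ → Set ℝ)
    (hV : Monotone V) (hsub : ∀ j, V j ⊆ cell (0, k₀))
    (hopen : ∀ j, ∀ x ∈ V j, ∃ p, x ∈ cell p ∧ cell p ⊆ V j) :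
    M q (⋃ j, V j) ≤ ⨆ j, M q (V j) := by
  set m : ℕ × ℤ → ℝ≥0∞ := fun p => ⨆ j, M q (V j ∩ cell p) with hm
  set Z : Set (ℕ × ℤ) := {p | q ^ p.1 ≤ m p} with hZ
  set S : Set (ℕ × ℤ) := {r | r ∈ Z ∧ ∀ r' ∈ Z, r'.1 < r.1 → ¬ cell r ⊆ cell r'} with hS
  have hcov : (⋃ j, V j) ⊆ ⋃ p ∈ S, cell p := by
    intro x hx
    obtain ⟨j, hj⟩ := mem_iUnion.1 hx
    obtain ⟨p, hxp, hp⟩ := hopen j x hj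
    have hpZ : p ∈ Z := by
      refine (M_cell hq hq2 p).trans (le_trans ?_ (le_iSup _ j))
      rw [inter_eq_self_of_subset_right hp]
    obtain ⟨r, hr, hxr, hmax⟩ := exists_max _ hpZ hxp
    exact mem_iUnion₂.2 ⟨r, ⟨hr, hmax⟩, hxr⟩
  have hrec : ∀ n k, (n, k) ∉ Z → m (n+1, 2*k) + m (n+1, 2*k+1) ≤ m (n, k) := by
    intro n k hnk
    have hlt : m (n,k) < q ^ n := not_le.1 hnk
    rw [hm]
    dsimp only
    rw [ENNReal.iSup_add_iSup_of_monotone]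
    · refine iSup_le fun j => ?_
      refine le_trans ?_ (le_iSup _ j)
      have h1 := M_rec hq (V j) n k
      rcases min_le_iff.1 h1 with h | h
      · exact absurd (h.trans (le_iSup (fun j => M q (V j ∩ cell (n,k))) j)) (not_le.2 hlt)
      · exact h
    · exact fun i j hij => M_mono q (inter_subset_inter_left _ (hV hij))
    · exact fun i j hij => M_mono q (inter_subset_inter_left _ (hV hij))
  have hind : ∀ N d n k, N < n + d → (∀ r' ∈ Z, r'.1 < n → ¬ cell (n,k) ⊆ cell r') →
      w q {r ∈ S | r.1 ≤ N ∧ cell r ⊆ cell (n,k) ∧ n ≤ r.1} ≤ m (n,k) := by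
    intro N d
    induction d with
    | zero =>
      intro n k hn _
      have : {r ∈ S | r.1 ≤ N ∧ cell r ⊆ cell (n,k) ∧ n ≤ r.1} = ∅ := by
        ext r
        simp only [mem_ofPred_eq, mem_empty_iff_false, iff_false]
        rintro ⟨-, h1, -, h2⟩
        omega
      rw [this]; simp
    | succ d ih =>
      intro n k hn hanc
      by_cases hz : (n,k) ∈ Z
      · refine le_trans ?_ (show q ^ n ≤ m (n,k) from hz)
        rw [← w_singleton q (n,k)]
        refine measure_mono ?_
        rintro r ⟨hr, -, hsub', hle⟩
        rcases hle.lt_or_eq with h | h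
        · exact absurd hsub' (hr.2 _ hz h)
        · obtain ⟨x, hx⟩ := cell_nonempty r
          exact cell_inj (p := r) (r := (n,k)) h hx (hsub' hx)
      · refine le_trans ?_ (hrec n k hz)
        have hch : ∀ j, cell (n+1, j) ⊆ cell (n,k) → 
            ∀ r' ∈ Z, r'.1 < n+1 → ¬ cell (n+1,j) ⊆ cell r' := by
          intro j hj r' hr' hlt hss
          obtain ⟨x, hx⟩ := cell_nonempty (n+1, j)
          rcases (Nat.lt_succ_iff.1 hlt).lt_or_eq with h | h
          · exact hanc r' hr' h (cell_subset h.le (hj hx) (hss hx))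
          · have := cell_inj (p := (n,k)) (r := r') h (hj hx) (hss hx)
            exact hz (this ▸ hr')
        have h0 := ih (n+1) (2*k) (by omega)
          (hch _ (by rw [cell_split n k]; exact subset_union_left))
        have h1 := ih (n+1) (2*k+1) (by omega)
          (hch _ (by rw [cell_split n k]; exact subset_union_right))
        refine le_trans ?_ (add_le_add h0 h1)
        refine le_trans (measure_mono ?_) (measure_union_le _ _)
        rintro r ⟨hr, hrN, hsub', hle⟩
        obtain ⟨x, hx⟩ := cell_nonempty r
        have hlt : n + 1 ≤ r.1 := by
          rcases hle.lt_or_eq with h | h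
          · exact h
          · have := cell_inj (p := r) (r := (n,k)) h hx (hsub' hx)
            exact absurd (this ▸ hr.1) hz
        have hx2 := hsub' hx
        rw [cell_split n k] at hx2
        rcases hx2 with hx2 | hx2
        · exact Or.inl ⟨hr, hrN, cell_subset hlt hx hx2, hlt⟩
        · exact Or.inr ⟨hr, hrN, cell_subset hlt hx hx2, hlt⟩
  have hroot : ∀ N, w q {r ∈ S | r.1 ≤ N ∧ cell r ⊆ cell (0,k₀) ∧ 0 ≤ r.1} ≤ ⨆ j, M q (V j) := by
    intro N
    refine (hind N (N+1) 0 k₀ (by omega) (by intro r _ h; omega)).trans ?_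
    exact iSup_mono fun j => M_mono q inter_subset_left
  have hcov2 : (⋃ j, V j) ⊆ ⋃ p ∈ (⋃ N, {r ∈ S | r.1 ≤ N ∧ cell r ⊆ cell (0,k₀) ∧ 0 ≤ r.1}),
      cell p := by
    intro x hx
    obtain ⟨p, hp, hxp⟩ := mem_iUnion₂.1 (hcov hx)
    obtain ⟨j, hj⟩ := mem_iUnion.1 hx
    exact mem_iUnion₂.2 ⟨p, mem_iUnion.2 ⟨p.1, hp, le_rfl,
      cell_subset (Nat.zero_le _) hxp (hsub j hj), Nat.zero_le _⟩, hxp⟩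
  refine (M_le hcov2).trans ?_
  rw [Monotone.measure_iUnion]
  · exact iSup_le hroot
  · rintro a b hab r ⟨hr, h1, h2⟩
    exact ⟨hr, h1.trans hab, h2⟩

/-- increasing sets lemma -/
lemma M_iUnion {q : ℝ≥0∞} (hq : q ≤ 1) (hq2 : 2⁻¹ ≤ q) (k₀ : ℤ) (E : ℕ → Set ℝ)
    (hE : Monotone E) (hsub : ∀ j, E j ⊆ cell (0, k₀)) :
    M q (⋃ j, E j) ≤ ⨆ j, M q (E j) := by
  have hfin : ∀ A ⊆ cell (0, k₀), M q A ≠ ∞ := fun A hA =>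
    ne_top_of_le_ne_top (by simp) ((M_mono q hA).trans (M_cell_le _))
  refine ENNReal.le_of_forall_pos_le_add fun ε hε _ => ?_
  obtain ⟨δ, hδ, hsum⟩ := ENNReal.exists_pos_sum_of_countable (ε := ε)
    (by exact_mod_cast hε.ne') ℕ
  have hU : ∀ j, ∃ U : Set ℝ, E j ⊆ U ∧ U ⊆ cell (0,k₀) ∧ M q U ≤ M q (E j) + δ j ∧
      ∀ x ∈ U, ∃ p, x ∈ cell p ∧ cell p ⊆ U := by
    intro j
    have hlt : M q (E j) < M q (E j) + δ j := by
      apply ENNReal.lt_add_right (hfin _ (hsub j))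
      exact_mod_cast (hδ j).ne'
    obtain ⟨S, hS⟩ := iInf_lt_iff.1 hlt
    obtain ⟨hcov, hw⟩ := iInf_lt_iff.1 hS
    refine ⟨(⋃ p ∈ S, cell p) ∩ cell (0,k₀), subset_inter hcov (hsub j), inter_subset_right,
      ?_, ?_⟩
    · exact (M_le inter_subset_left).trans hw.le
    · rintro x ⟨hx, hx0⟩
      obtain ⟨p, hp, hxp⟩ := mem_iUnion₂.1 hx
      refine ⟨p, hxp, subset_inter (subset_biUnion_of_mem (u := fun p => cell p) hp) ?_⟩
      exact cell_subset (Nat.zero_le _) hxp hx0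
  choose U hEU hU0 hUM hUo using hU
  set V : ℕ → Set ℝ := fun n => ⋃ i ∈ Finset.range (n+1), U i with hVdef
  have hV0 : ∀ n, V n ⊆ cell (0,k₀) := fun n => iUnion₂_subset fun i _ => hU0 i
  have hVs : ∀ n, V (n+1) = V n ∪ U (n+1) := by
    intro n
    simp only [hVdef]
    rw [Finset.range_add_one, Finset.set_biUnion_insert, union_comm]
  have hVM : ∀ n, M q (V n) ≤ M q (E n) + ∑ i ∈ Finset.range (n+1), (δ i : ℝ≥0∞) := by
    intro n
    induction n with
    | zero => simpa [hVdef] using hUM 0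
    | succ n ih =>
      have hs := M_strong q (V n) (U (n+1))
      rw [← hVs] at hs
      have hEn : M q (E n) ≤ M q (V n ∩ U (n+1)) := by
        refine M_mono q (subset_inter ?_ ((hE (Nat.le_succ n)).trans (hEU (n+1))))
        exact (hEU n).trans (subset_biUnion_of_mem (u := fun i => U i) (by simp))
      have h2 : M q (E n) + M q (V (n+1)) ≤
          M q (E n) + (M q (E (n+1)) + ∑ i ∈ Finset.range (n+1+1), (δ i : ℝ≥0∞)) := by
        calc _ ≤ M q (V (n+1)) + M q (V n ∩ U (n+1)) := by rw [add_comm]; gcongr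
          _ ≤ _ := hs
          _ ≤ _ := add_le_add ih (hUM (n+1))
          _ = _ := by rw [Finset.sum_range_succ _ (n+1)]; ring
      exact (ENNReal.add_le_add_iff_left (hfin _ (hsub n))).1 h2
  have hVmono : Monotone V := monotone_nat_of_le_succ fun n => by
    rw [hVs]; exact subset_union_left
  have hopen : ∀ j, ∀ x ∈ V j, ∃ p, x ∈ cell p ∧ cell p ⊆ V j := by
    intro j x hx
    obtain ⟨i, hi, hxi⟩ := mem_iUnion₂.1 hx
    obtain ⟨p, h1, h2⟩ := hUo i x hxi
    exact ⟨p, h1, h2.trans (subset_biUnion_of_mem (u := fun i => U i) hi)⟩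
  calc M q (⋃ j, E j) ≤ M q (⋃ j, V j) := M_mono q (iUnion_mono fun j =>
        (hEU j).trans (subset_biUnion_of_mem (u := fun i => U i) (by simp)))
    _ ≤ ⨆ j, M q (V j) := M_iUnion_open hq hq2 k₀ V hVmono hV0 hopen
    _ ≤ (⨆ j, M q (E j)) + ε := by
      refine iSup_le fun n => (hVM n).trans ?_
      refine add_le_add (le_iSup (fun j => M q (E j)) n) ?_
      exact (ENNReal.sum_le_tsum _).trans hsum.le

end Mars

open MeasureTheory Set
open scoped ENNReal NNReal

namespace Mars
open Filter Topology

lemma ediam_cell (p : ℕ × ℤ) : Metric.ediam (cell p) = (2⁻¹ : ℝ≥0∞) ^ p.1 := by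
  rw [← volume_cell, cell_eq_Ico, Real.ediam_Ico, Real.volume_Ico]

lemma rpow_pow_comm (s : ℝ) (n : ℕ) : ((2⁻¹ : ℝ≥0∞) ^ n) ^ s = ((2⁻¹ : ℝ≥0∞) ^ s) ^ n := by
  rw [← ENNReal.rpow_natCast, ← ENNReal.rpow_natCast, ← ENNReal.rpow_mul, ← ENNReal.rpow_mul,
    mul_comm]

lemma hausdorff_zero {s : ℝ} (hs : 0 < s) {E : Set ℝ} (h : M ((2⁻¹ : ℝ≥0∞) ^ s) E = 0) :
    μH[s] E = 0 := by
  set q : ℝ≥0∞ := (2⁻¹ : ℝ≥0∞) ^ s with hq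
  have hq0 : 0 < q := ENNReal.rpow_pos (by norm_num) (by norm_num)
  have hq1 : q < 1 := ENNReal.rpow_lt_one (by norm_num) hs
  have hex : ∀ j : ℕ, ∃ S : Set (ℕ × ℤ), E ⊆ (⋃ p ∈ S, cell p) ∧ w q S < q ^ j := by
    intro j
    have hlt : M q E < q ^ j := by rw [h]; exact ENNReal.pow_pos hq0 j
    obtain ⟨S, hS⟩ := iInf_lt_iff.1 hlt
    obtain ⟨hcov, hw⟩ := iInf_lt_iff.1 hS
    exact ⟨S, hcov, hw⟩
  choose S hS hw using hex
  have hle := Measure.hausdorffMeasure_le_liminf_tsum s E (l := atTop) (ι := fun j => S j)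
    (fun j => (2⁻¹ : ℝ≥0∞) ^ j) (ENNReal.tendsto_pow_atTop_nhds_zero_of_lt_one (by norm_num))
    (fun j p => cell p.1) (Eventually.of_forall fun j p => ?_)
    (Eventually.of_forall fun j => by simpa [iUnion_subtype] using hS j)
  · refine le_antisymm (hle.trans ?_) bot_le
    have hlim : Tendsto (fun j => q ^ j) atTop (𝓝 0) :=
      ENNReal.tendsto_pow_atTop_nhds_zero_of_lt_one hq1
    rw [← hlim.liminf_eq]
    refine liminf_le_liminf (Eventually.of_forall fun j => ?_)
    refine le_trans (le_of_eq ?_) (hw j).le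
    rw [w_eq_tsum]
    refine tsum_congr fun p => ?_
    rw [ediam_cell, rpow_pow_comm]
  · rw [ediam_cell]
    refine pow_le_pow_right_of_le_one' (by norm_num) ?_
    by_contra hcon
    push Not at hcon
    have h1 : q ^ p.1.1 < q ^ j := (le_w p.2).trans_lt (hw j)
    exact absurd (pow_le_pow_right_of_le_one' hq1.le hcon.le) (not_le.2 h1)

/-- compact subsets with large content of all neighbourhoods -/
lemma exists_compact {q : ℝ≥0∞} (hq : q ≤ 1) (hq2 : 2⁻¹ ≤ q) (k₀ : ℤ) {K : Set ℝ}
    (hK : MeasurableSet K) (hsub : K ⊆ cell (0, k₀)) {c : ℝ≥0∞} (hc : c < M q K) :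
    ∃ C ⊆ K, IsCompact C ∧ ∀ U, IsOpen U → C ⊆ U → c < M q U := by
  have han := hK.analyticSet
  rw [AnalyticSet] at han
  rcases han with rfl | ⟨f, hf, hfK⟩
  · exact ⟨∅, subset_rfl, isCompact_empty, fun U _ _ => hc.trans_le (M_mono q (empty_subset _))⟩
  have hstep : ∀ (k : ℕ) (B : {B : Set (ℕ → ℕ) // c < M q (f '' B)}),
      ∃ m : ℕ, c < M q (f '' (B.1 ∩ {x | x k ≤ m})) := by
    intro k B
    have hU : f '' B.1 = ⋃ m : ℕ, f '' (B.1 ∩ {x | x k ≤ m}) := by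
      rw [← image_iUnion, ← inter_iUnion]
      congr 1
      ext x
      simp only [mem_inter_iff, mem_iUnion, mem_ofPred_eq, iff_self_and]
      exact fun _ => ⟨x k, le_rfl⟩
    have h1 := B.2
    rw [hU] at h1
    have h2 := h1.trans_le (M_iUnion hq hq2 k₀ _ ?_ ?_)
    · exact lt_iSup_iff.1 h2
    · intro a b hab
      exact image_mono (inter_subset_inter_right _ fun x hx => le_trans hx hab)
    · intro m
      refine (image_subset_range _ _).trans (hfK.subset.trans hsub)
  choose g hg using hstep
  let seq : ℕ → {B : Set (ℕ → ℕ) // c < M q (f '' B)} := fun n =>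
    Nat.rec ⟨univ, by rw [image_univ, hfK]; exact hc⟩ (fun k B => ⟨_, hg k B⟩) n
  let N : ℕ → ℕ := fun k => g k (seq k)
  have hseq : ∀ k, (seq k).1 = {x | ∀ i < k, x i ≤ N i} := by
    intro k
    induction k with
    | zero => ext x; simp [seq]
    | succ k ih =>
      have : (seq (k+1)).1 = (seq k).1 ∩ {x | x k ≤ N k} := rfl
      rw [this, ih]
      ext x
      simp only [mem_inter_iff, mem_ofPred_eq]
      constructor
      · rintro ⟨h1, h2⟩ i hi
        rcases Nat.lt_succ_iff_lt_or_eq.1 hi with h | rfl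
        · exact h1 i h
        · exact h2
      · exact fun h => ⟨fun i hi => h i (by omega), h k (by omega)⟩
  have hcomp : IsCompact (Set.pi univ fun i => Iic (N i)) :=
    isCompact_univ_pi fun i => (finite_Iic (N i)).isCompact
  refine ⟨f '' (Set.pi univ fun i => Iic (N i)), (image_subset_range _ _).trans hfK.subset,
    hcomp.image hf, fun U hU hCU => ?_⟩
  suffices ∃ k, f '' (seq k).1 ⊆ U by
    obtain ⟨k, hk⟩ := this
    exact (seq k).2.trans_le (M_mono q hk)
  by_contra hcon
  push Not at hcon
  have hx : ∀ k, ∃ x : ℕ → ℕ, (∀ i < k, x i ≤ N i) ∧ f x ∉ U := by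
    intro k
    obtain ⟨y, ⟨x, hx, rfl⟩, hy⟩ := not_subset.1 (hcon k)
    rw [hseq] at hx
    exact ⟨x, hx, hy⟩
  choose x hxN hxU using hx
  obtain ⟨a, ha, φ, hφ, hlim⟩ := hcomp.tendsto_subseq (x := fun k i => min (x k i) (N i))
    (fun k i _ => mem_Iic.2 (min_le_right _ _))
  have hlim2 : Tendsto (fun k => x (φ k)) atTop (𝓝 a) := by
    rw [tendsto_pi_nhds] at hlim ⊢
    intro i
    refine (hlim i).congr' ?_
    filter_upwards [eventually_gt_atTop i] with k hk
    exact min_eq_left (hxN _ _ (hk.trans_le (hφ.id_le k)))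
  have hfa : f a ∈ U := hCU ⟨a, ha, rfl⟩
  have hev := ((hf.tendsto a).comp hlim2).eventually (hU.mem_nhds hfa)
  obtain ⟨k, hk⟩ := hev.exists
  exact hxU _ hk

lemma near_cells {j : ℕ} {x z : ℝ} (h : |x - z| ≤ (2⁻¹ : ℝ) ^ j) :
    x ∈ cell (j, ⌊(2:ℝ) ^ j * z⌋ - 1) ∪ cell (j, ⌊(2:ℝ) ^ j * z⌋) ∪ cell (j, ⌊(2:ℝ) ^ j * z⌋ + 1) := by
  have hpos : (0:ℝ) < 2 ^ j := by positivity
  have h2 : |(2:ℝ) ^ j * x - 2 ^ j * z| ≤ 1 := by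
    rw [← mul_sub, abs_mul, abs_of_pos hpos]
    calc _ ≤ (2:ℝ) ^ j * (2⁻¹ : ℝ) ^ j := by gcongr
      _ = 1 := by rw [← mul_pow]; norm_num
  rw [abs_le] at h2
  have h3 : ⌊(2:ℝ) ^ j * x⌋ ≤ ⌊(2:ℝ) ^ j * z⌋ + 1 := by
    rw [← Int.floor_add_one]; exact Int.floor_le_floor (by linarith)
  have h4 : ⌊(2:ℝ) ^ j * z⌋ ≤ ⌊(2:ℝ) ^ j * x⌋ + 1 := by
    rw [← Int.floor_add_one]; exact Int.floor_le_floor (by linarith)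
  simp only [cell, mem_union, mem_ofPred_eq]
  omega

lemma w_shift (q : ℝ≥0∞) (S : Set (ℕ × ℤ)) (d : ℤ) :
    w q {p | (p.1, p.2 + d) ∈ S} ≤ w q S := by
  rw [w_eq_tsum, w_eq_tsum]
  exact ENNReal.tsum_comp_le_tsum_of_injective
    (f := fun p : {p : ℕ × ℤ | (p.1, p.2 + d) ∈ S} => (⟨(p.1.1, p.1.2 + d), p.2⟩ : S))
    (by
      rintro ⟨⟨a, b⟩, h⟩ ⟨⟨a', b'⟩, h'⟩ hh
      simp only [Subtype.mk.injEq, Prod.mk.injEq] at hh ⊢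
      omega) (fun p : S => q ^ p.1.1)

lemma M_pos_of_open {q : ℝ≥0∞} {C : Set ℝ} {c : ℝ≥0∞} (hc : c ≠ 0)
    (h : ∀ U, IsOpen U → C ⊆ U → c < M q U) : M q C ≠ 0 := by
  intro h0
  have hlt : M q C < c / 3 := by
    rw [h0]; exact ENNReal.div_pos hc (by norm_num)
  obtain ⟨S, hS⟩ := iInf_lt_iff.1 hlt
  obtain ⟨hcov, hw⟩ := iInf_lt_iff.1 hS
  set S' : Set (ℕ × ℤ) := {p | (p.1, p.2 + 1) ∈ S} ∪ {p | (p.1, p.2 + 0) ∈ S} ∪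
    {p | (p.1, p.2 + (-1)) ∈ S} with hS'
  have hU : C ⊆ interior (⋃ p ∈ S', cell p) := by
    intro x hx
    obtain ⟨p, hp, hxp⟩ := mem_iUnion₂.1 (hcov hx)
    rw [mem_interior_iff_mem_nhds]
    refine Filter.mem_of_superset (Metric.closedBall_mem_nhds x
      (show (0:ℝ) < (2⁻¹ : ℝ) ^ p.1 by positivity)) fun y hy => ?_
    rw [Metric.mem_closedBall, Real.dist_eq] at hy
    have hy2 := near_cells hy
    have hpx : ⌊(2:ℝ) ^ p.1 * x⌋ = p.2 := hxp
    rw [hpx] at hy2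
    rcases hy2 with (hy2 | hy2) | hy2
    · exact mem_iUnion₂.2 ⟨_, Or.inl (Or.inl (by simpa using hp)), hy2⟩
    · exact mem_iUnion₂.2 ⟨_, Or.inl (Or.inr (by simpa using hp)), hy2⟩
    · exact mem_iUnion₂.2 ⟨_, Or.inr (by simpa using hp), hy2⟩
  have h1 := h _ isOpen_interior hU
  have h2 : M q (interior (⋃ p ∈ S', cell p)) ≤ w q S + w q S + w q S := by
    refine (M_le interior_subset).trans ?_
    refine (measure_union_le _ _).trans (add_le_add ((measure_union_le _ _).trans
      (add_le_add ?_ ?_)) ?_) <;> exact w_shift q S _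
  have h3 : w q S + w q S + w q S ≤ c := by
    calc _ ≤ c / 3 + c / 3 + c / 3 := by gcongr
      _ = c := ENNReal.add_thirds c
  exact absurd (h2.trans h3) (not_le.2 h1)

noncomputable def flow (m : ℕ × ℤ → ℝ≥0∞) : ℕ → ℤ → ℝ≥0∞
  | 0, k => m (0, k)
  | n+1, k => if Even k then min (flow m n (k/2)) (m (n+1, k))
      else flow m n (k/2) - m (n+1, k-1)

lemma flow_even (m : ℕ × ℤ → ℝ≥0∞) (n : ℕ) (k : ℤ) :
    flow m (n+1) (2*k) = min (flow m n k) (m (n+1, 2*k)) := by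
  rw [flow, if_pos (even_two_mul k), show 2 * k / 2 = k by omega]

lemma flow_odd (m : ℕ × ℤ → ℝ≥0∞) (n : ℕ) (k : ℤ) :
    flow m (n+1) (2*k+1) = flow m n k - m (n+1, 2*k) := by
  rw [flow, if_neg (by simp), show (2 * k + 1) / 2 = k by omega, show 2 * k + 1 - 1 = 2 * k by ring]

lemma flow_add (m : ℕ × ℤ → ℝ≥0∞) (n : ℕ) (k : ℤ) :
    flow m (n+1) (2*k) + flow m (n+1) (2*k+1) = flow m n k := by
  rw [flow_even, flow_odd]
  rcases le_total (flow m n k) (m (n+1, 2*k)) with h | h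
  · rw [min_eq_left h, tsub_eq_zero_of_le h, add_zero]
  · rw [min_eq_right h, add_tsub_cancel_of_le h]

lemma flow_le {m : ℕ × ℤ → ℝ≥0∞} (hm : ∀ n k, m (n,k) ≤ m (n+1, 2*k) + m (n+1, 2*k+1)) :
    ∀ n k, flow m n k ≤ m (n,k) := by
  intro n
  induction n with
  | zero => intro k; exact le_rfl
  | succ n ih =>
    intro k
    rcases Int.even_or_odd' k with ⟨l, rfl | rfl⟩
    · rw [flow_even]; exact min_le_right _ _
    · rw [flow_odd, tsub_le_iff_left]
      exact (ih l).trans (hm n l)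

lemma frostman_aux {q : ℝ≥0∞} {C : Set ℝ} {k₀ : ℤ} (hC : C ⊆ cell (0, k₀)) (n : ℕ) :
    ∃ (ι : Finset ℤ) (a : ℤ → ℝ≥0∞) (x : ℤ → ℝ), (∀ i ∈ ι, x i ∈ C) ∧ ∑ i ∈ ι, a i = M q C ∧
      ∀ j ≤ n, ∀ k, (∑ i ∈ ι, a i • Measure.dirac (x i)) (cell (j,k)) ≤ q ^ j := by
  classical
  set m : ℕ × ℤ → ℝ≥0∞ := fun p => M q (C ∩ cell p) with hm
  have hmsub : ∀ n k, m (n,k) ≤ m (n+1, 2*k) + m (n+1, 2*k+1) := by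
    intro n k
    simp only [hm]
    rw [cell_split, inter_union_distrib_left]
    exact M_union_le _ _ _
  have hfl := flow_le hmsub
  have hx : ∀ i : ℤ, ∃ x : ℝ, x ∈ cell (n,i) ∧ ((C ∩ cell (n,i)).Nonempty → x ∈ C) := by
    intro i
    by_cases h : (C ∩ cell (n,i)).Nonempty
    · obtain ⟨x, hx⟩ := h
      exact ⟨x, hx.2, fun _ => hx.1⟩
    · obtain ⟨x, hx⟩ := cell_nonempty (n,i)
      exact ⟨x, hx, fun hh => absurd hh h⟩
  choose x hxc hxC using hx
  set ι : Finset ℤ := (Finset.Ico (2 ^ n * k₀) (2 ^ n * (k₀ + 1))).filter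
    (fun i => (C ∩ cell (n,i)).Nonempty) with hι
  have hιmem : ∀ i, (C ∩ cell (n,i)).Nonempty → i ∈ ι := by
    intro i hi
    refine Finset.mem_filter.2 ⟨?_, hi⟩
    obtain ⟨y, hy, hyi⟩ := hi
    have hy0 := hC hy
    rw [cell_eq_Ico] at hy0
    simp only [pow_zero, div_one, mem_Ico] at hy0
    have hyi' : ⌊(2:ℝ) ^ n * y⌋ = i := hyi
    have hpos : (0:ℝ) < 2 ^ n := by positivity
    rw [Finset.mem_Ico, ← hyi']
    constructor
    · rw [Int.le_floor]; push_cast; exact mul_le_mul_of_nonneg_left hy0.1 hpos.le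
    · rw [Int.floor_lt]; push_cast; exact mul_lt_mul_of_pos_left hy0.2 hpos
  set μ : Measure ℝ := ∑ i ∈ ι, flow m n i • Measure.dirac (x i) with hμ
  have hμap : ∀ B : Set ℝ, μ B = ∑ i ∈ ι, flow m n i * B.indicator 1 (x i) := by
    intro B
    simp [hμ, Measure.finsetSum_apply]
  have hμcell : ∀ d j k, j + d = n → μ (cell (j,k)) = flow m j k := by
    intro d
    induction d with
    | zero =>
      intro j k hj
      obtain rfl : j = n := by omega
      rw [hμap]
      have hind : ∀ i, (cell (j,k)).indicator (1 : ℝ → ℝ≥0∞) (x i) = if i = k then 1 else 0 := by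
        intro i
        by_cases hik : i = k
        · subst hik; simp [hxc]
        · rw [if_neg hik, indicator_of_notMem]
          intro hmem
          exact hik (congrArg Prod.snd (cell_inj (p := (j,i)) (r := (j,k)) rfl (hxc i) hmem))
      simp only [hind, mul_ite, mul_one, mul_zero, Finset.sum_ite_eq']
      split_ifs with h
      · rfl
      · refine (le_antisymm ((hfl j k).trans ?_) bot_le).symm
        have : C ∩ cell (j,k) = ∅ := by
          by_contra hne
          exact h (hιmem k (nonempty_iff_ne_empty.2 hne))
        simp only [hm, this]
        refine (M_le (S := ∅) (by simp)).trans (by simp)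
    | succ d ih =>
      intro j k hj
      rw [cell_split, measure_union (cell_split_disj j k), ih _ _ (by omega), ih _ _ (by omega),
        flow_add]
      rw [cell_eq_Ico]; exact measurableSet_Ico
  refine ⟨ι, flow m n, x, fun i hi => hxC i (Finset.mem_filter.1 hi).2, ?_, ?_⟩
  · have h1 := hμcell n 0 k₀ (by omega)
    rw [hμap] at h1
    have h2 : flow m 0 k₀ = M q C := by
      simp only [flow, hm]; rw [inter_eq_self_of_subset_left hC]
    rw [← h2, ← h1]
    refine Finset.sum_congr rfl fun i hi => ?_
    rw [indicator_of_mem (hC (hxC i (Finset.mem_filter.1 hi).2))]; simp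
  · intro j hj k
    rw [← hμ, hμcell (n - j) j k (by omega)]
    exact (hfl j k).trans (M_inter_cell_le C (j,k))

lemma frostman {K : Set ℝ} (hK : MeasurableSet K) {s : ℝ≥0} (hs0 : 0 < s) (hs1 : s ≤ 1)
    (h : (s : ℝ≥0∞) < dimH K) :
    ∃ C ⊆ K, IsCompact C ∧ (∀ x ∈ C, ∀ y ∈ C, |x - y| ≤ 1) ∧ ∃ b : ℝ≥0∞, b ≠ 0 ∧ b ≤ 1 ∧ ∀ n : ℕ,
      ∃ (ι : Finset ℤ) (a : ℤ → ℝ≥0∞) (x : ℤ → ℝ), (∀ i ∈ ι, x i ∈ C) ∧ ∑ i ∈ ι, a i = b ∧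
      ∀ (z ρ : ℝ), (2⁻¹ : ℝ) ^ n ≤ ρ →
        ∑ i ∈ ι, a i * (Metric.closedBall z ρ).indicator 1 (x i) ≤ ENNReal.ofReal (6 * ρ ^ (s:ℝ)) := by
  set q : ℝ≥0∞ := (2⁻¹ : ℝ≥0∞) ^ (s:ℝ) with hqdef
  have hq1 : q ≤ 1 := ENNReal.rpow_le_one (by norm_num) s.2
  have hq2 : 2⁻¹ ≤ q := by
    calc (2⁻¹ : ℝ≥0∞) = 2⁻¹ ^ (1:ℝ) := by simp
      _ ≤ q := ENNReal.rpow_le_rpow_of_exponent_ge (by norm_num) (by exact_mod_cast hs1)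
  have hunion : K = ⋃ k : ℤ, K ∩ cell (0, k) := by
    rw [← inter_iUnion, eq_comm, inter_eq_left]
    intro x _
    exact mem_iUnion.2 ⟨_, mem_cell 0 x⟩
  rw [hunion, dimH_iUnion] at h
  obtain ⟨k₀, hk₀⟩ := lt_iSup_iff.1 h
  have hmeas : MeasurableSet (K ∩ cell (0,k₀)) :=
    hK.inter (by rw [cell_eq_Ico]; exact measurableSet_Ico)
  have hMpos : M q (K ∩ cell (0,k₀)) ≠ 0 := by
    intro h0
    have h1 := hausdorff_zero (by exact_mod_cast hs0) h0
    rw [hausdorffMeasure_of_lt_dimH hk₀] at h1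
    exact absurd h1 (by simp)
  obtain ⟨c, hc0, hc⟩ := exists_between (pos_iff_ne_zero.2 hMpos)
  obtain ⟨C, hCK, hCc, hCU⟩ := exists_compact hq1 hq2 k₀ hmeas inter_subset_right hc
  have hC0 : C ⊆ cell (0,k₀) := hCK.trans inter_subset_right
  have hb1 : M q C ≤ 1 := (M_mono q hC0).trans ((M_cell_le _).trans (by simp))
  refine ⟨C, hCK.trans inter_subset_left, hCc, ?_, M q C, M_pos_of_open hc0.ne' hCU, hb1, fun n => ?_⟩
  · intro x hx y hy
    have hx' := hC0 hx
    have hy' := hC0 hy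
    rw [cell_eq_Ico] at hx' hy'
    simp only [pow_zero, div_one, mem_Ico] at hx' hy'
    rw [abs_le]; constructor <;> linarith
  · obtain ⟨ι, a, x, hxC, hsum, hcell⟩ := frostman_aux (q := q) hC0 n
    refine ⟨ι, a, x, hxC, hsum, fun z ρ hρ => ?_⟩
    have hρ0 : 0 < ρ := lt_of_lt_of_le (by positivity) hρ
    by_cases hρ1 : 1 ≤ ρ
    · calc _ ≤ ∑ i ∈ ι, a i := by
            refine Finset.sum_le_sum fun i _ => ?_
            refine mul_le_of_le_one_right' ?_
            exact indicator_le_self' (fun _ _ => zero_le) _ |>.trans (by simp)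
        _ ≤ 1 := hsum.trans_le hb1
        _ ≤ _ := by
          rw [ENNReal.one_le_ofReal]
          have := Real.one_le_rpow hρ1 s.2
          simp only [NNReal.val_eq_coe] at this
          linarith
    · push Not at hρ1
      obtain ⟨j, hj1, hj2⟩ := exists_nat_pow_near_of_lt_one hρ0 hρ1.le
        (show (0:ℝ) < 2⁻¹ by norm_num) (by norm_num)
      have hjn : j ≤ n := by
        by_contra hcon
        push Not at hcon
        have : (2⁻¹ : ℝ) ^ j < 2⁻¹ ^ n := pow_lt_pow_right_of_lt_one₀ (by norm_num) (by norm_num) hcon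
        linarith
      set μ : Measure ℝ := ∑ i ∈ ι, a i • Measure.dirac (x i) with hμ
      have hμap : ∀ B : Set ℝ, μ B = ∑ i ∈ ι, a i * B.indicator 1 (x i) := by
        intro B
        simp [hμ, Measure.finsetSum_apply]
      rw [← hμap]
      have h3 : μ (Metric.closedBall z ρ) ≤ q ^ j + q ^ j + q ^ j := by
        refine (measure_mono fun y hy => near_cells (j := j) (z := z) ?_).trans ?_
        · rw [Metric.mem_closedBall, Real.dist_eq] at hy
          exact hy.trans hj2
        · refine (measure_union_le _ _).trans (add_le_add ((measure_union_le _ _).trans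
            (add_le_add ?_ ?_)) ?_) <;> exact hcell j hjn _
      refine h3.trans ?_
      have hqj : q ^ j = ENNReal.ofReal (((2⁻¹ : ℝ) ^ j) ^ (s:ℝ)) := by
        rw [hqdef, ← rpow_pow_comm, ← ENNReal.ofReal_rpow_of_pos (by positivity),
          ENNReal.ofReal_pow (by positivity), ENNReal.ofReal_inv_of_pos (by norm_num)]
        simp
      rw [hqj, ← ENNReal.ofReal_add (by positivity) (by positivity),
        ← ENNReal.ofReal_add (by positivity) (by positivity)]
      refine ENNReal.ofReal_le_ofReal ?_
      have h4 : ((2⁻¹ : ℝ) ^ j) ^ (s:ℝ) ≤ 2 * ρ ^ (s:ℝ) := by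
        calc ((2⁻¹ : ℝ) ^ j) ^ (s:ℝ) ≤ (2 * ρ) ^ (s:ℝ) := by
              refine Real.rpow_le_rpow (by positivity) ?_ s.2
              rw [pow_succ] at hj1; linarith
          _ = 2 ^ (s:ℝ) * ρ ^ (s:ℝ) := Real.mul_rpow (by norm_num) hρ0.le
          _ ≤ 2 ^ (1:ℝ) * ρ ^ (s:ℝ) := by
              gcongr
              · norm_num
              · exact_mod_cast hs1
          _ = _ := by simp
      linarith

end Mars

open MeasureTheory Set
open scoped ENNReal NNReal

namespace Mars
open Filter Topology

lemma cs_bound {J : Type*} (I : Finset J) (c : J → ℝ≥0∞) (f : J → ℝ) {r : ℝ} (hr : 0 < r)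
    {T : Set ℝ} (hT : ∀ z ∈ I, f z ∈ T) :
    ENNReal.ofReal (2 * r) * (∑ z ∈ I, c z) ^ 2 ≤ volume (Metric.cthickening r T) *
      ∑ z ∈ I, ∑ z' ∈ I, c z * c z' * {l : ℝ | |l| ≤ 2 * r}.indicator 1 (f z - f z') := by
  set g : ℝ → ℝ≥0∞ := fun u => ∑ z ∈ I, c z * (Metric.closedBall (f z) r).indicator 1 u with hg
  set T' := Metric.cthickening r T with hT'
  have hT'm : MeasurableSet T' := Metric.isClosed_cthickening.measurableSet
  have hgm : Measurable g := by
    refine Finset.measurable_fun_sum _ fun z _ => Measurable.const_mul ?_ _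
    exact measurable_one.indicator Metric.isClosed_closedBall.measurableSet
  have hint : ∫⁻ u, g u = ENNReal.ofReal (2 * r) * ∑ z ∈ I, c z := by
    rw [lintegral_finsetSum]
    · rw [Finset.mul_sum]
      refine Finset.sum_congr rfl fun z _ => ?_
      rw [lintegral_const_mul, lintegral_indicator_one Metric.isClosed_closedBall.measurableSet,
        Real.volume_closedBall, mul_comm]
      exact measurable_one.indicator Metric.isClosed_closedBall.measurableSet
    · intro z _
      refine Measurable.const_mul ?_ _
      exact measurable_one.indicator Metric.isClosed_closedBall.measurableSet
  have hsupp : (fun u => (g * (T'.indicator 1 : ℝ → ℝ≥0∞)) u) = g := by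
    ext u
    by_cases hu : u ∈ T'
    · simp [hu]
    · have : g u = 0 := by
        refine Finset.sum_eq_zero fun z hz => ?_
        rw [indicator_of_notMem, mul_zero]
        intro hmem
        exact hu (Metric.closedBall_subset_cthickening (hT z hz) r hmem)
      simp [this]
  have hcs : ∫⁻ u, g u ≤ (∫⁻ u, g u ^ (2:ℝ)) ^ (1/(2:ℝ)) *
      (∫⁻ u, (T'.indicator 1 u : ℝ≥0∞) ^ (2:ℝ)) ^ (1/(2:ℝ)) := by
    conv_lhs => rw [← hsupp]
    exact ENNReal.lintegral_mul_le_Lp_mul_Lq volume Real.HolderConjugate.two_two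
      hgm.aemeasurable (measurable_one.indicator hT'm).aemeasurable
  have hI2 : ∫⁻ u, (T'.indicator 1 u : ℝ≥0∞) ^ (2:ℝ) = volume T' := by
    rw [← lintegral_indicator_one hT'm]
    refine lintegral_congr fun u => ?_
    by_cases hu : u ∈ T' <;> simp [hu]
  have hg2 : ∫⁻ u, g u ^ (2:ℝ) ≤ ENNReal.ofReal (2 * r) *
      ∑ z ∈ I, ∑ z' ∈ I, c z * c z' * {l : ℝ | |l| ≤ 2 * r}.indicator 1 (f z - f z') := by
    have hexp : ∀ u, g u ^ (2:ℝ) = ∑ z ∈ I, ∑ z' ∈ I, c z * c z' *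
        (Metric.closedBall (f z) r ∩ Metric.closedBall (f z') r).indicator 1 u := by
      intro u
      rw [ENNReal.rpow_two, pow_two, hg, Finset.sum_mul_sum]
      refine Finset.sum_congr rfl fun z _ => Finset.sum_congr rfl fun z' _ => ?_
      rw [inter_indicator_one]
      simp only [Pi.mul_apply]
      ring
    simp_rw [hexp]
    have hmi : ∀ z z', Measurable ((Metric.closedBall (f z) r ∩
        Metric.closedBall (f z') r).indicator (1 : ℝ → ℝ≥0∞)) := fun z z' =>
      measurable_one.indicator (Metric.isClosed_closedBall.measurableSet.inter
        Metric.isClosed_closedBall.measurableSet)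
    rw [lintegral_finsetSum _ (fun z _ => Finset.measurable_fun_sum _ fun z' _ =>
      (hmi z z').const_mul _), Finset.mul_sum]
    refine Finset.sum_le_sum fun z _ => ?_
    rw [lintegral_finsetSum _ (fun z' _ => (hmi z z').const_mul _), Finset.mul_sum]
    refine Finset.sum_le_sum fun z' _ => ?_
    rw [lintegral_const_mul _ (hmi z z'), lintegral_indicator_one
      (Metric.isClosed_closedBall.measurableSet.inter Metric.isClosed_closedBall.measurableSet),
      mul_left_comm]
    gcongr
    by_cases hd : |f z - f z'| ≤ 2 * r
    · rw [indicator_of_mem (by exact hd), Pi.one_apply, mul_one, ← Real.volume_closedBall (f z)]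
      exact measure_mono inter_subset_left
    · have : Metric.closedBall (f z) r ∩ Metric.closedBall (f z') r = ∅ := by
        ext u
        simp only [mem_inter_iff, Metric.mem_closedBall, Real.dist_eq, mem_empty_iff_false,
          iff_false]
        rintro ⟨h1, h2⟩
        apply hd
        have := abs_sub_le (f z) u (f z')
        rw [abs_sub_comm (f z) u] at this
        linarith
      rw [this]; simp
  set E := ∑ z ∈ I, ∑ z' ∈ I, c z * c z' * {l : ℝ | |l| ≤ 2 * r}.indicator 1 (f z - f z') with hE
  have hsq : (∫⁻ u, g u) ^ 2 ≤ (∫⁻ u, g u ^ (2:ℝ)) * volume T' := by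
    rw [hI2] at hcs
    calc (∫⁻ u, g u) ^ 2 ≤ ((∫⁻ u, g u ^ (2:ℝ)) ^ (1/(2:ℝ)) * (volume T') ^ (1/(2:ℝ))) ^ 2 := by
          gcongr
      _ = _ := by
        rw [mul_pow, ← ENNReal.rpow_two, ← ENNReal.rpow_two, ← ENNReal.rpow_mul,
          ← ENNReal.rpow_mul]
        norm_num
  have h2r0 : ENNReal.ofReal (2 * r) ≠ 0 := by
    rw [ne_eq, ENNReal.ofReal_eq_zero, not_le]; positivity
  have hfin : ENNReal.ofReal (2 * r) * (ENNReal.ofReal (2 * r) * (∑ z ∈ I, c z) ^ 2) ≤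
      ENNReal.ofReal (2 * r) * (volume T' * E) := by
    calc _ = (∫⁻ u, g u) ^ 2 := by rw [hint]; ring
      _ ≤ _ := hsq
      _ ≤ (ENNReal.ofReal (2 * r) * E) * volume T' := by gcongr
      _ = _ := by ring
  exact (ENNReal.mul_le_mul_iff_right h2r0 ENNReal.ofReal_ne_top).1 hfin

lemma shell {s : ℝ} (hs : s ≤ 1) {d : ℝ} (hd0 : 0 ≤ d) (hd1 : d ≤ 1) (n : ℕ) :
    ENNReal.ofReal ((max d ((2⁻¹ : ℝ) ^ n)) ^ (s - 1)) ≤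
      ∑ l ∈ Finset.range (n+1), ENNReal.ofReal (((2⁻¹ : ℝ) ^ (l+1)) ^ (s-1)) *
        {d : ℝ | d ≤ (2⁻¹ : ℝ) ^ l}.indicator 1 d := by
  have hex : ∃ l ≤ n, d ≤ (2⁻¹ : ℝ) ^ l ∧ (2⁻¹ : ℝ) ^ (l+1) ≤ max d ((2⁻¹ : ℝ) ^ n) := by
    by_cases hd : d ≤ (2⁻¹ : ℝ) ^ n
    · refine ⟨n, le_rfl, hd, le_max_of_le_right ?_⟩
      exact pow_le_pow_of_le_one (by norm_num) (by norm_num) (Nat.le_succ n)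
    · push Not at hd
      obtain ⟨l, h1, h2⟩ := exists_nat_pow_near_of_lt_one
        (lt_of_lt_of_le (by positivity) hd.le) hd1 (show (0:ℝ) < 2⁻¹ by norm_num) (by norm_num)
      refine ⟨l, ?_, h2, le_max_of_le_left h1.le⟩
      by_contra hcon
      push Not at hcon
      have : (2⁻¹ : ℝ) ^ l < 2⁻¹ ^ n := pow_lt_pow_right_of_lt_one₀ (by norm_num) (by norm_num) hcon
      linarith
  obtain ⟨l, hl, h1, h2⟩ := hex
  refine le_trans ?_ (Finset.single_le_sum (fun _ _ => zero_le)
    (Finset.mem_range.2 (Nat.lt_succ_of_le hl)))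
  rw [indicator_of_mem (by exact h1), Pi.one_apply, mul_one]
  exact ENNReal.ofReal_le_ofReal (Real.rpow_le_rpow_of_nonpos (by positivity) h2 (by linarith))

lemma energy_sum {s t : ℝ} (hs : s ≤ 1) (hst : 1 < s + t) :
    ∃ G : ℝ≥0∞, G ≠ ∞ ∧ ∀ (n : ℕ) (κ : Finset ℤ) (b : ℤ → ℝ≥0∞) (y : ℤ → ℝ) (z : ℝ),
      (∀ j ∈ κ, |y j - z| ≤ 1) →
      (∀ ρ : ℝ, (2⁻¹ : ℝ) ^ n ≤ ρ →
        ∑ i ∈ κ, b i * (Metric.closedBall z ρ).indicator 1 (y i) ≤ ENNReal.ofReal (6 * ρ ^ t)) →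
      ∑ j ∈ κ, b j * ENNReal.ofReal ((max |y j - z| ((2⁻¹ : ℝ) ^ n)) ^ (s - 1)) ≤ G := by
  set θ : ℝ := (2⁻¹ : ℝ) ^ (s + t - 1) with hθ
  have hθ0 : 0 < θ := by positivity
  have hθ1 : θ < 1 := Real.rpow_lt_one (by norm_num) (by norm_num) (by linarith)
  set A : ℝ := 6 * (2⁻¹ : ℝ) ^ (s-1) with hA
  have hA0 : 0 < A := by positivity
  refine ⟨ENNReal.ofReal A * (1 - ENNReal.ofReal θ)⁻¹, ?_, ?_⟩
  · refine ENNReal.mul_ne_top ENNReal.ofReal_ne_top (ENNReal.inv_ne_top.2 ?_)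
    rw [ne_eq, tsub_eq_zero_iff_le, not_le]
    rw [ENNReal.ofReal_lt_one]; exact hθ1
  intro n κ b y z hy hfr
  calc ∑ j ∈ κ, b j * ENNReal.ofReal ((max |y j - z| ((2⁻¹ : ℝ) ^ n)) ^ (s - 1))
      ≤ ∑ j ∈ κ, b j * ∑ l ∈ Finset.range (n+1), ENNReal.ofReal (((2⁻¹ : ℝ) ^ (l+1)) ^ (s-1)) *
        {d : ℝ | d ≤ (2⁻¹ : ℝ) ^ l}.indicator 1 |y j - z| := by
        refine Finset.sum_le_sum fun j hj => ?_
        gcongr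
        exact shell hs (abs_nonneg _) (hy j hj) n
    _ = ∑ l ∈ Finset.range (n+1), ENNReal.ofReal (((2⁻¹ : ℝ) ^ (l+1)) ^ (s-1)) *
          ∑ j ∈ κ, b j * (Metric.closedBall z ((2⁻¹ : ℝ) ^ l)).indicator 1 (y j) := by
        simp_rw [Finset.mul_sum]
        rw [Finset.sum_comm]
        refine Finset.sum_congr rfl fun l _ => Finset.sum_congr rfl fun j _ => ?_
        rw [mul_left_comm]
        rfl
    _ ≤ ∑ l ∈ Finset.range (n+1), ENNReal.ofReal A * ENNReal.ofReal θ ^ l := by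
        refine Finset.sum_le_sum fun l hl => ?_
        have hln : l ≤ n := Nat.lt_succ_iff.1 (Finset.mem_range.1 hl)
        calc _ ≤ ENNReal.ofReal (((2⁻¹ : ℝ) ^ (l+1)) ^ (s-1)) *
              ENNReal.ofReal (6 * ((2⁻¹ : ℝ) ^ l) ^ t) := by
              gcongr
              exact hfr _ (pow_le_pow_of_le_one (by norm_num) (by norm_num) hln)
          _ = ENNReal.ofReal A * ENNReal.ofReal θ ^ l := by
              rw [← ENNReal.ofReal_pow hθ0.le, ← ENNReal.ofReal_mul (by positivity),
                ← ENNReal.ofReal_mul hA0.le]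
              congr 1
              have e1 : θ ^ l = ((2⁻¹ : ℝ) ^ l) ^ (s-1) * ((2⁻¹ : ℝ) ^ l) ^ t := by
                rw [← Real.rpow_add (by positivity), hθ, ← Real.rpow_natCast, ← Real.rpow_natCast,
                  ← Real.rpow_mul (by norm_num), ← Real.rpow_mul (by norm_num)]
                congr 1; ring
              rw [e1, hA, pow_succ, Real.mul_rpow (by positivity) (by positivity)]
              ring
    _ ≤ ∑' l, ENNReal.ofReal A * ENNReal.ofReal θ ^ l := ENNReal.sum_le_tsum _
    _ = _ := by rw [ENNReal.tsum_mul_left, ENNReal.tsum_geometric]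

lemma vol_bound {R r α β : ℝ} (hR : 0 ≤ R) (hr : 0 < r) :
    volume ({l : ℝ | |α - l * β| ≤ 2 * r} ∩ Icc (-R) R) ≤
      ENNReal.ofReal ((2 * R + 4) * r / max |β| r) *
        {a : ℝ | |a| ≤ (R + 2) * max |β| r}.indicator 1 α := by
  set e := max |β| r with he
  have he0 : 0 < e := lt_max_of_lt_right hr
  by_cases hα : |α| ≤ (R + 2) * e
  · rw [indicator_of_mem (by exact hα), Pi.one_apply, mul_one]
    by_cases hβ : |β| ≤ r
    · have : e = r := max_eq_right hβ
      rw [this, mul_div_assoc, div_self hr.ne', mul_one]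
      refine (measure_mono inter_subset_right).trans ?_
      rw [Real.volume_Icc]
      exact ENNReal.ofReal_le_ofReal (by linarith)
    · push Not at hβ
      have hee : e = |β| := max_eq_left hβ.le
      have hβ0 : 0 < |β| := hr.trans hβ
      have hβne : β ≠ 0 := abs_pos.1 hβ0
      rw [hee]
      have hsub : {l : ℝ | |α - l * β| ≤ 2 * r} ∩ Icc (-R) R ⊆
          Metric.closedBall (α / β) (2 * r / |β|) := by
        rintro l ⟨hl, -⟩
        have hl' : |α - l * β| ≤ 2 * r := hl
        rw [Metric.mem_closedBall, Real.dist_eq, le_div_iff₀ hβ0, ← abs_mul, sub_mul,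
          div_mul_cancel₀ _ hβne, abs_sub_comm]
        exact hl'
      refine (measure_mono hsub).trans ?_
      rw [Real.volume_closedBall]
      refine ENNReal.ofReal_le_ofReal ?_
      rw [← mul_div_assoc]
      exact div_le_div_of_nonneg_right (by nlinarith) hβ0.le
  · have : {l : ℝ | |α - l * β| ≤ 2 * r} ∩ Icc (-R) R = ∅ := by
      ext l
      simp only [mem_inter_iff, mem_ofPred_eq, mem_Icc, mem_empty_iff_false, iff_false]
      rintro ⟨h1, h2⟩
      apply hα
      have hl : |l| ≤ R := abs_le.2 h2
      have h3 : |α| ≤ |α - l * β| + |l * β| := by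
        have := abs_add_le (α - l * β) (l * β)
        simpa using this
      rw [abs_mul] at h3
      have h4 : |l| * |β| ≤ R * e := mul_le_mul hl (le_max_left _ _) (abs_nonneg _) hR
      have h5 : r ≤ e := le_max_right _ _
      nlinarith
    rw [this]; simp

lemma energy_bound {s t : ℝ} (hs0 : 0 ≤ s) (hs : s ≤ 1) (hst : 1 < s + t) {R : ℝ} (hR : 0 ≤ R) :
    ∃ D : ℝ≥0∞, D ≠ ∞ ∧ ∀ (n : ℕ) (ι κ : Finset ℤ) (a b : ℤ → ℝ≥0∞) (x y : ℤ → ℝ),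
      (∀ j ∈ κ, ∀ j' ∈ κ, |y j - y j'| ≤ 1) →
      ∑ i ∈ ι, a i ≤ 1 → ∑ j ∈ κ, b j ≤ 1 →
      (∀ z ρ : ℝ, (2⁻¹ : ℝ) ^ n ≤ ρ →
        ∑ i ∈ ι, a i * (Metric.closedBall z ρ).indicator 1 (x i) ≤ ENNReal.ofReal (6 * ρ ^ s)) →
      (∀ z ρ : ℝ, (2⁻¹ : ℝ) ^ n ≤ ρ →
        ∑ i ∈ κ, b i * (Metric.closedBall z ρ).indicator 1 (y i) ≤ ENNReal.ofReal (6 * ρ ^ t)) →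
      ∑ z ∈ ι ×ˢ κ, ∑ z' ∈ ι ×ˢ κ, (a z.1 * b z.2) * (a z'.1 * b z'.2) *
        volume ({l : ℝ | |(x z.1 - x z'.1) - l * (y z.2 - y z'.2)| ≤ 2 * (2⁻¹ : ℝ) ^ n} ∩
          Icc (-R) R) ≤ D * ENNReal.ofReal ((2⁻¹ : ℝ) ^ n) := by
  obtain ⟨G, hG, hGb⟩ := energy_sum hs hst
  set A : ℝ := (2 * R + 4) * (6 * (R + 2) ^ s) with hA
  have hA0 : 0 ≤ A := by positivity
  refine ⟨ENNReal.ofReal A * G, ENNReal.mul_ne_top ENNReal.ofReal_ne_top hG, ?_⟩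
  intro n ι κ a b x y hy1 hasum hbsum hfa hfb
  set r : ℝ := (2⁻¹ : ℝ) ^ n with hr
  have hr0 : 0 < r := by positivity
  have inner : ∀ z ∈ ι ×ˢ κ, ∑ z' ∈ ι ×ˢ κ, (a z'.1 * b z'.2) *
        volume ({l : ℝ | |(x z.1 - x z'.1) - l * (y z.2 - y z'.2)| ≤ 2 * r} ∩
          Icc (-R) R) ≤ ENNReal.ofReal A * G * ENNReal.ofReal r := by
    intro z hz
    have hz2 : z.2 ∈ κ := (Finset.mem_product.1 hz).2
    rw [Finset.sum_product_right]
    have h1 : ∀ j ∈ κ, ∑ i ∈ ι, (a i * b j) *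
        volume ({l : ℝ | |(x z.1 - x i) - l * (y z.2 - y j)| ≤ 2 * r} ∩ Icc (-R) R) ≤
        ENNReal.ofReal A * ENNReal.ofReal r *
          (b j * ENNReal.ofReal ((max |y j - y z.2| r) ^ (s-1))) := by
      intro j _
      set e := max |y j - y z.2| r with he
      have he0 : 0 < e := lt_max_of_lt_right hr0
      have hre : r ≤ e := le_max_right _ _
      calc _ ≤ ∑ i ∈ ι, (a i * b j) * (ENNReal.ofReal ((2 * R + 4) * r / e) *
            (Metric.closedBall (x z.1) ((R+2) * e)).indicator 1 (x i)) := by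
            refine Finset.sum_le_sum fun i _ => ?_
            gcongr
            refine (vol_bound hR hr0).trans (le_of_eq ?_)
            rw [abs_sub_comm (y z.2), ← he]
            congr 1
            simp only [indicator, mem_ofPred_eq, Metric.mem_closedBall, Real.dist_eq,
              abs_sub_comm (x z.1)]
            rfl
        _ = b j * ENNReal.ofReal ((2 * R + 4) * r / e) *
            ∑ i ∈ ι, a i * (Metric.closedBall (x z.1) ((R+2) * e)).indicator 1 (x i) := by
            rw [Finset.mul_sum]
            exact Finset.sum_congr rfl fun i _ => by ring
        _ ≤ b j * ENNReal.ofReal ((2 * R + 4) * r / e) *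
            ENNReal.ofReal (6 * ((R+2) * e) ^ s) := by
            gcongr
            exact hfa _ _ (by nlinarith)
        _ = _ := by
            have key : ENNReal.ofReal ((2 * R + 4) * r / e) * ENNReal.ofReal (6 * ((R+2) * e) ^ s) =
                ENNReal.ofReal A * ENNReal.ofReal r * ENNReal.ofReal (e ^ (s-1)) := by
              rw [← ENNReal.ofReal_mul (by positivity), ← ENNReal.ofReal_mul hA0,
                ← ENNReal.ofReal_mul (by positivity)]
              congr 1
              rw [Real.mul_rpow (by positivity) he0.le, Real.rpow_sub_one he0.ne', hA]
              ring
            rw [mul_assoc, key]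
            ring
    calc _ ≤ ∑ j ∈ κ, ENNReal.ofReal A * ENNReal.ofReal r *
          (b j * ENNReal.ofReal ((max |y j - y z.2| r) ^ (s-1))) := Finset.sum_le_sum h1
      _ = ENNReal.ofReal A * ENNReal.ofReal r *
          ∑ j ∈ κ, b j * ENNReal.ofReal ((max |y j - y z.2| r) ^ (s-1)) := by rw [Finset.mul_sum]
      _ ≤ ENNReal.ofReal A * ENNReal.ofReal r * G := by
          gcongr
          exact hGb n κ b y (y z.2) (fun j hj => hy1 j hj _ hz2) (hfb _)
      _ = _ := by ring
  calc _ = ∑ z ∈ ι ×ˢ κ, (a z.1 * b z.2) * ∑ z' ∈ ι ×ˢ κ, (a z'.1 * b z'.2) *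
        volume ({l : ℝ | |(x z.1 - x z'.1) - l * (y z.2 - y z'.2)| ≤ 2 * r} ∩ Icc (-R) R) := by
        refine Finset.sum_congr rfl fun z _ => ?_
        rw [Finset.mul_sum]
        exact Finset.sum_congr rfl fun z' _ => by ring
    _ ≤ ∑ z ∈ ι ×ˢ κ, (a z.1 * b z.2) * (ENNReal.ofReal A * G * ENNReal.ofReal r) := by
        refine Finset.sum_le_sum fun z hz => ?_
        gcongr
        exact inner z hz
    _ = (∑ i ∈ ι, a i) * (∑ j ∈ κ, b j) * (ENNReal.ofReal A * G * ENNReal.ofReal r) := by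
        rw [← Finset.sum_mul, Finset.sum_product, Finset.sum_mul_sum]
    _ ≤ 1 * 1 * (ENNReal.ofReal A * G * ENNReal.ofReal r) := by gcongr
    _ = _ := by ring

lemma exists_exponents {d₁ d₂ : ℝ≥0∞} (h1 : d₁ ≤ 1) (h2 : d₂ ≤ 1) (h : 1 < d₁ + d₂) :
    ∃ s t : ℝ≥0, 0 < s ∧ s ≤ 1 ∧ 0 < t ∧ t ≤ 1 ∧ (1:ℝ) < s + t ∧ (s : ℝ≥0∞) < d₁ ∧ (t : ℝ≥0∞) < d₂ := by
  lift d₁ to ℝ≥0 using ne_top_of_le_ne_top (by simp) h1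
  lift d₂ to ℝ≥0 using ne_top_of_le_ne_top (by simp) h2
  norm_cast at h1 h2 h ⊢
  have h1' : (d₁:ℝ) ≤ 1 := h1
  have h2' : (d₂:ℝ) ≤ 1 := h2
  have h' : (1:ℝ) < d₁ + d₂ := by exact_mod_cast h
  set ε : ℝ := ((d₁:ℝ) + d₂ - 1) / 4 with hε
  have hε0 : 0 < ε := by rw [hε]; linarith
  have e1 : 0 < (d₁:ℝ) - ε := by rw [hε]; linarith
  have e2 : 0 < (d₂:ℝ) - ε := by rw [hε]; linarith
  obtain ⟨s, hs⟩ : ∃ s : ℝ≥0, (s:ℝ) = d₁ - ε := ⟨⟨_, e1.le⟩, rfl⟩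
  obtain ⟨t, ht⟩ : ∃ s : ℝ≥0, (s:ℝ) = d₂ - ε := ⟨⟨_, e2.le⟩, rfl⟩
  refine ⟨s, t, ?_, ?_, ?_, ?_, ?_, ?_, ?_⟩
  · rw [← NNReal.coe_lt_coe, hs]; exact e1
  · rw [← NNReal.coe_le_coe, hs]; push_cast; linarith
  · rw [← NNReal.coe_lt_coe, ht]; exact e2
  · rw [← NNReal.coe_le_coe, ht]; push_cast; linarith
  · rw [← NNReal.coe_lt_coe]; push_cast; rw [hs, ht]; linarith
  · rw [← NNReal.coe_lt_coe, hs]; linarith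
  · rw [← NNReal.coe_lt_coe, ht]; linarith

theorem main (K₁ K₂ : Set ℝ) (h₁ : MeasurableSet K₁) (h₂ : MeasurableSet K₂)
    (hd : 1 < dimH K₁ + dimH K₂) :
    ∀ᵐ l : ℝ, 0 < volume (Set.image2 (fun x y => x - l * y) K₁ K₂) := by
  have hdim : ∀ K : Set ℝ, dimH K ≤ 1 := fun K => by
    rw [← Real.dimH_univ]; exact dimH_mono (subset_univ _)
  obtain ⟨s, t, hs0, hs1, ht0, ht1, hst, hsK, htK⟩ := exists_exponents (hdim K₁) (hdim K₂) hd
  obtain ⟨C₁, hC₁K, hC₁, -, b₁, hb₁, hb₁1, hf₁⟩ := frostman h₁ hs0 hs1 hsK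
  obtain ⟨C₂, hC₂K, hC₂, hdiam, b₂, hb₂, hb₂1, hf₂⟩ := frostman h₂ ht0 ht1 htK
  choose ι a x hxC hasum hfa using hf₁
  choose κ b y hyC hbsum hfb using hf₂
  set r : ℕ → ℝ := fun n => (2⁻¹ : ℝ) ^ n with hr
  have hr0 : ∀ n, 0 < r n := fun n => by positivity
  set E : ℕ → ℝ → ℝ≥0∞ := fun n l => ∑ z ∈ ι n ×ˢ κ n, ∑ z' ∈ ι n ×ˢ κ n,
    (a n z.1 * b n z.2) * (a n z'.1 * b n z'.2) *
      {l : ℝ | |(x n z.1 - x n z'.1) - l * (y n z.2 - y n z'.2)| ≤ 2 * r n}.indicator 1 l with hE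
  have hclosed : ∀ n (z z' : ℤ × ℤ),
      MeasurableSet {l : ℝ | |(x n z.1 - x n z'.1) - l * (y n z.2 - y n z'.2)| ≤ 2 * r n} :=
    fun n z z' => (isClosed_le (by fun_prop) (by fun_prop)).measurableSet
  have hmi : ∀ n (z z' : ℤ × ℤ), Measurable
      ({l : ℝ | |(x n z.1 - x n z'.1) - l * (y n z.2 - y n z'.2)| ≤ 2 * r n}.indicator
        (1 : ℝ → ℝ≥0∞)) := fun n z z' => measurable_one.indicator (hclosed n z z')
  have hEm : ∀ n, Measurable (E n) := fun n =>
    Finset.measurable_fun_sum _ fun z _ => Finset.measurable_fun_sum _ fun z' _ =>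
      (hmi n z z').const_mul _
  have hbd : ∀ R : ℕ, ∀ᵐ l : ℝ, l ∈ Icc (-(R:ℝ)) R →
      liminf (fun n => E n l / ENNReal.ofReal (r n)) atTop < ∞ := by
    intro R
    rw [← ae_restrict_iff' measurableSet_Icc]
    obtain ⟨D, hD, hDb⟩ := energy_bound (s := s) (t := t) s.2 (by exact_mod_cast hs1) hst
      (R := R) (Nat.cast_nonneg R)
    have hm' : ∀ n, Measurable fun l => E n l / ENNReal.ofReal (r n) := fun n =>
      (hEm n).div_const _
    refine ae_lt_top (Measurable.liminf hm') ?_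
    refine ne_top_of_le_ne_top hD ((lintegral_liminf_le hm').trans ?_)
    refine liminf_le_of_le (by isBoundedDefault) fun c hc => ?_
    obtain ⟨n, hn⟩ := hc.exists
    refine hn.trans ?_
    have hint : ∫⁻ l in Icc (-(R:ℝ)) R, E n l ≤ D * ENNReal.ofReal (r n) := by
      refine le_trans (le_of_eq ?_) (hDb n (ι n) (κ n) (a n) (b n) (x n) (y n)
        (fun j hj j' hj' => hdiam _ (hyC n j hj) _ (hyC n j' hj')) ((hasum n).trans_le hb₁1)
        ((hbsum n).trans_le hb₂1) (hfa n) (hfb n))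
      simp only [hE]
      rw [lintegral_finsetSum _ (fun z _ => Finset.measurable_fun_sum _ fun z' _ =>
        (hmi n z z').const_mul _)]
      refine Finset.sum_congr rfl fun z _ => ?_
      rw [lintegral_finsetSum _ (fun z' _ => (hmi n z z').const_mul _)]
      refine Finset.sum_congr rfl fun z' _ => ?_
      rw [lintegral_const_mul _ (hmi n z z'), lintegral_indicator_one (hclosed n z z'),
        Measure.restrict_apply (hclosed n z z')]
    simp_rw [div_eq_mul_inv]
    rw [lintegral_mul_const _ (hEm n), ← div_eq_mul_inv]
    exact ENNReal.div_le_of_le_mul hint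
  rw [← ae_all_iff] at hbd
  filter_upwards [hbd] with l hl
  obtain ⟨R, hR⟩ := exists_nat_ge |l|
  have hlim := hl R (abs_le.1 hR)
  refine lt_of_lt_of_le ?_ (measure_mono (image2_subset hC₁K hC₂K))
  set T := Set.image2 (fun x y => x - l * y) C₁ C₂ with hT
  have hTc : IsCompact T := by
    rw [hT, ← image_prod]
    exact (hC₁.prod hC₂).image (by fun_prop)
  by_contra hcon
  have hT0 : volume T = 0 := le_antisymm (not_lt.1 hcon) bot_le
  obtain ⟨H, hH1, hH2⟩ := exists_between hlim
  have hfreq := frequently_lt_of_liminf_lt (by isBoundedDefault) hH1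
  have hrlim : Tendsto r atTop (𝓝 0) :=
    tendsto_pow_atTop_nhds_zero_of_lt_one (by norm_num) (by norm_num)
  have hv : Tendsto (fun n => volume (Metric.cthickening (r n) T) * H) atTop (𝓝 0) := by
    have h1 := (tendsto_measure_cthickening_of_isCompact (μ := volume) hTc).comp hrlim
    rw [hT0] at h1
    simpa using ENNReal.Tendsto.mul_const h1 (Or.inr hH2.ne)
  have hB0 : (0:ℝ≥0∞) < 2 * (b₁ * b₂) ^ 2 := by
    have : b₁ * b₂ ≠ 0 := mul_ne_zero hb₁ hb₂
    exact pos_iff_ne_zero.2 (mul_ne_zero (by norm_num) (pow_ne_zero _ this))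
  obtain ⟨n, hn1, hn2⟩ := (hfreq.and_eventually (hv.eventually (gt_mem_nhds hB0))).exists
  have hcs := cs_bound (ι n ×ˢ κ n) (fun z => a n z.1 * b n z.2)
    (fun z => x n z.1 - l * y n z.2) (hr0 n) (T := T)
    (fun z hz => ⟨_, hxC n _ (Finset.mem_product.1 hz).1, _, hyC n _ (Finset.mem_product.1 hz).2, rfl⟩)
  have hsum : ∑ z ∈ ι n ×ˢ κ n, a n z.1 * b n z.2 = b₁ * b₂ := by
    rw [Finset.sum_product, ← Finset.sum_mul_sum, hasum, hbsum]
  have hEl : ∑ z ∈ ι n ×ˢ κ n, ∑ z' ∈ ι n ×ˢ κ n, a n z.1 * b n z.2 * (a n z'.1 * b n z'.2) *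
      {l : ℝ | |l| ≤ 2 * r n}.indicator 1 (x n z.1 - l * y n z.2 - (x n z'.1 - l * y n z'.2)) =
      E n l := by
    refine Finset.sum_congr rfl fun z _ => Finset.sum_congr rfl fun z' _ => ?_
    congr 1
    have : x n z.1 - l * y n z.2 - (x n z'.1 - l * y n z'.2) =
      (x n z.1 - x n z'.1) - l * (y n z.2 - y n z'.2) := by ring
    rw [this]
    rfl
  rw [hsum, hEl] at hcs
  have hρ0 : ENNReal.ofReal (r n) ≠ 0 := by
    rw [ne_eq, ENNReal.ofReal_eq_zero, not_le]; exact hr0 n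
  have hEH : E n l ≤ H * ENNReal.ofReal (r n) :=
    (ENNReal.div_le_iff hρ0 ENNReal.ofReal_ne_top).1 hn1.le
  have hfin : ENNReal.ofReal (r n) * (2 * (b₁ * b₂) ^ 2) ≤
      ENNReal.ofReal (r n) * (volume (Metric.cthickening (r n) T) * H) := by
    calc _ = ENNReal.ofReal (2 * r n) * (b₁ * b₂) ^ 2 := by
          rw [ENNReal.ofReal_mul (by norm_num)]; simp; ring
      _ ≤ _ := hcs
      _ ≤ volume (Metric.cthickening (r n) T) * (H * ENNReal.ofReal (r n)) := by gcongr
      _ = _ := by ring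
  exact absurd ((ENNReal.mul_le_mul_iff_right hρ0 ENNReal.ofReal_ne_top).1 hfin) (not_le.2 hn2)

end Mars

open MeasureTheory Set

theorem stmt_3 (K₁ K₂ : Set ℝ) (h₁ : MeasurableSet K₁) (h₂ : MeasurableSet K₂)
    (hd : 1 < dimH K₁ + dimH K₂) :
    ∀ᵐ l : ℝ, 0 < volume (Set.image2 (fun x y => x - l * y) K₁ K₂) := by
  exact Mars.main K₁ K₂ h₁ h₂ hd
end
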